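/- arXiv:1907.00964 — 3 statements merged into one kernel-verified Lean document; each statement's English description precedes it below -/
import Mathlib

section
/- For each integer t ≥ 3, there exists a constant C = C(t) > 0 such that every tournament on n ≥ C vertices that is C·n^{-1/⌈t/2⌉}-far from being transitive (i.e., every linear ordering of its vertex set has at least C·n^{2-1/⌈t/2⌉} backward edges) contains a copy of the unavoidable t-tournament 𝒰_t. -/
/-- `T` is a tournament: an orientation of the complete graph. -/
def IsTournament {V : Type*} (T : V → V → Prop) : Prop :=
  (∀ x, ¬ T x x) ∧ ∀ x y, x ≠ y → (T x y ↔ ¬ T y x)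

/-- The unavoidable `t`-tournament `𝒰_t` on `Fin 3 × Fin t`: three transitive classes
of order `t`, with all edges from class `i` to class `i + 1` (mod 3). -/
def UPat (t : ℕ) (p q : Fin 3 × Fin t) : Prop :=
  (p.1 = q.1 ∧ p.2 < q.2) ∨ q.1 = p.1 + 1

/-- `T` contains a copy of the unavoidable `t`-tournament `𝒰_t`. -/
def ContainsU {V : Type*} (T : V → V → Prop) (t : ℕ) : Prop :=
  ∃ f : Fin 3 × Fin t → V, Function.Injective f ∧
    ∀ p q : Fin 3 × Fin t, UPat t p q → T (f p) (f q)

/-- The number of backward edges of the ordering `σ` of the vertices of `T`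
(position `k` is occupied by the vertex `σ k`). -/
noncomputable def backCount {n : ℕ} {V : Type*} (T : V → V → Prop) (σ : Fin n ≃ V) : ℕ :=
  {p : Fin n × Fin n | p.1 < p.2 ∧ T (σ p.2) (σ p.1)}.ncard

section

open Finset
open scoped Classical

section

variable {V : Type*} {T : V → V → Prop}

lemma IsTournament.asymm (hT : IsTournament T) {x y : V} (h : T x y) : ¬ T y x := by
  have hne : x ≠ y := by rintro rfl; exact hT.1 _ h
  exact (hT.2 x y hne).1 h

lemma IsTournament.of_not (hT : IsTournament T) {x y : V} (hne : x ≠ y) (h : ¬ T x y) :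
    T y x := by
  by_contra h'
  exact h ((hT.2 x y hne).2 h')

/-- A sequence of vertices all of whose edges point forward. -/
def IsTransSeq (T : V → V → Prop) {k : ℕ} (f : Fin k → V) : Prop :=
  ∀ i j, i < j → T (f i) (f j)

/-- The transitive sequences of length `k` in the vertex set `S`. -/
noncomputable def transSeqs (T : V → V → Prop) (k : ℕ) (S : Finset V) : Finset (Fin k → V) :=
  (Fintype.piFinset fun _ => S).filter (IsTransSeq T)

lemma mem_transSeqs {k : ℕ} {S : Finset V} {f : Fin k → V} :
    f ∈ transSeqs T k S ↔ (∀ i, f i ∈ S) ∧ IsTransSeq T f := by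
  simp [transSeqs, Fintype.mem_piFinset]

lemma card_transSeqs_le (k : ℕ) (S : Finset V) : #(transSeqs T k S) ≤ #S ^ k := by
  refine (card_filter_le _ _).trans ?_
  simp

lemma sum_card_transSeqs_le (k : ℕ) (S : Finset V) :
    ∑ x ∈ S, #(transSeqs T k (S.filter (T x))) ≤ #(transSeqs T (k + 1) S) := by
  rw [← card_sigma]
  refine card_le_card_of_injOn (fun p => Fin.cons p.1 p.2) ?_ ?_
  · rintro ⟨x, f⟩ h
    simp only [coe_sigma, Set.mem_sigma_iff, mem_coe, mem_transSeqs, mem_filter] at h ⊢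
    obtain ⟨hx, hf, hT⟩ := h
    refine ⟨fun i => ?_, fun i j hij => ?_⟩
    · refine Fin.cases ?_ (fun i => ?_) i
      · simpa using hx
      · simpa using (hf i).1
    · induction j using Fin.cases with
      | zero => exact absurd hij (Fin.not_lt_zero i)
      | succ j =>
        induction i using Fin.cases with
        | zero => simpa using (hf j).2
        | succ i => simpa using hT i j (by simpa using hij)
  · rintro ⟨x, f⟩ _ ⟨y, g⟩ _ h
    obtain ⟨rfl, rfl⟩ := Fin.cons_inj.1 h
    rfl

lemma IsTournament.two_mul_sum_card (hT : IsTournament T) (S : Finset V) :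
    2 * ∑ x ∈ S, #(S.filter (T x)) + #S = #S * #S := by
  have h1 : ∀ x ∈ S, #(S.filter (T x)) + #(S.filter (fun y => T y x)) + 1 = #S := by
    intro x hx
    have h2 := card_filter_add_card_filter_not (s := S.erase x) (T x)
    have h3 : (S.erase x).filter (T x) = S.filter (T x) := by
      ext y
      simp only [mem_filter, mem_erase]
      refine ⟨fun h => ⟨h.1.2, h.2⟩, fun h => ⟨⟨?_, h.1⟩, h.2⟩⟩
      rintro rfl
      exact hT.1 _ h.2
    have h4 : (S.erase x).filter (fun y => ¬ T x y) = S.filter (fun y => T y x) := by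
      ext y
      simp only [mem_filter, mem_erase]
      refine ⟨fun h => ⟨h.1.2, hT.of_not h.1.1.symm h.2⟩, fun h => ⟨⟨?_, h.1⟩, hT.asymm h.2⟩⟩
      rintro rfl
      exact hT.1 _ h.2
    rw [h3, h4] at h2
    rw [h2]
    exact card_erase_add_one hx
  have h2 := sum_congr rfl h1
  simp only [sum_add_distrib, sum_const, smul_eq_mul, mul_one] at h2
  have h3 : ∑ x ∈ S, #(S.filter (fun y => T y x)) = ∑ x ∈ S, #(S.filter (T x)) :=
    (sum_card_bipartiteAbove_eq_sum_card_bipartiteBelow (s := S) (t := S) T).symm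
  rw [h3] at h2
  linarith

lemma le_sum_max_sub {ι : Type*} (S : Finset ι) (d : ι → ℝ) (a : ℝ) :
    max (∑ x ∈ S, d x - #S * a) 0 ≤ ∑ x ∈ S, max (d x - a) 0 := by
  refine max_le ?_ (sum_nonneg fun _ _ => le_max_right _ _)
  calc _ = ∑ x ∈ S, (d x - a) := by simp [sum_sub_distrib]
    _ ≤ _ := sum_le_sum fun _ _ => le_max_left _ _

lemma pow_sum_le_card_pow_mul {ι : Type*} (S : Finset ι) (d : ι → ℝ) (hd : ∀ x ∈ S, 0 ≤ d x)
    (k : ℕ) : (∑ x ∈ S, d x) ^ (k + 1) ≤ (#S : ℝ) ^ k * ∑ x ∈ S, d x ^ (k + 1) := by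
  rcases S.eq_empty_or_nonempty with rfl | hS
  · simp
  have := pow_sum_div_card_le_sum_pow (s := S) (f := d) hd k
  rwa [div_le_iff₀' (by positivity)] at this

lemma IsTournament.le_card_transSeqs (hT : IsTournament T) (k : ℕ) (S : Finset V) :
    (max ((#S : ℝ) + 1 - 2 ^ k) 0 / 2 ^ k) ^ k ≤ #(transSeqs T k S) := by
  induction k generalizing S with
  | zero =>
    have : #(transSeqs T 0 S) = 1 := by
      rw [card_eq_one]
      refine ⟨Fin.elim0, ?_⟩
      ext f
      simp only [mem_transSeqs, mem_singleton]
      exact ⟨fun _ => Subsingleton.elim _ _, fun _ => ⟨fun i => i.elim0, fun i => i.elim0⟩⟩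
    simp [this]
  | succ k ih =>
    rcases S.eq_empty_or_nonempty with rfl | hS
    · have : max (((#(∅ : Finset V) : ℕ) : ℝ) + 1 - 2 ^ (k + 1)) 0 = 0 := by
        refine max_eq_right ?_
        have : (1 : ℝ) ≤ 2 ^ (k + 1) := one_le_pow₀ (by norm_num)
        simpa using this
      rw [this]
      simp
    have hS0 : (0 : ℝ) < #S := by exact_mod_cast hS.card_pos
    have h2 := hT.two_mul_sum_card S
    have h2' : (∑ x ∈ S, (#(S.filter (T x)) : ℝ)) = #S * (#S - 1) / 2 := by
      have : (2 * ∑ x ∈ S, (#(S.filter (T x)) : ℝ) + #S) = #S * #S := by exact_mod_cast h2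
      linarith
    set D : ℝ := max ((#S : ℝ) + 1 - 2 ^ (k + 1)) 0 with hD
    have hD0 : 0 ≤ D := le_max_right _ _
    have hDS : D ≤ #S * 2 ^ (k + 1) := by
      have : (1 : ℝ) ≤ 2 ^ (k + 1) := one_le_pow₀ (by norm_num)
      refine max_le ?_ (by positivity)
      nlinarith
    have hDS' : D ≤ #S := by
      have : (1 : ℝ) ≤ 2 ^ (k + 1) := one_le_pow₀ (by norm_num)
      refine max_le ?_ (by positivity)
      linarith
    have key : ∑ x ∈ S, (max ((#(S.filter (T x)) : ℝ) + 1 - 2 ^ k) 0 / 2 ^ k) ^ k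
        ≤ #(transSeqs T (k + 1) S) := by
      calc _ ≤ ∑ x ∈ S, (#(transSeqs T k (S.filter (T x))) : ℝ) := sum_le_sum fun x _ => ih _
        _ ≤ _ := by exact_mod_cast sum_card_transSeqs_le k S
    refine le_trans ?_ key
    rcases k with _ | k
    · simpa using (half_le_self hD0).trans hDS'
    have h3 := pow_sum_le_card_pow_mul S
      (fun x => max ((#(S.filter (T x)) : ℝ) + 1 - 2 ^ (k + 1)) 0 / 2 ^ (k + 1))
      (fun x _ => by positivity) k
    have h4 : #S * (D / 2 ^ (k + 2)) ≤
        ∑ x ∈ S, max ((#(S.filter (T x)) : ℝ) + 1 - 2 ^ (k + 1)) 0 / 2 ^ (k + 1) := by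
      rw [← sum_div]
      have h5 := le_sum_max_sub S (fun x => (#(S.filter (T x)) : ℝ)) (2 ^ (k + 1) - 1)
      rw [h2'] at h5
      have h6 : #S * (D / 2) ≤ max ((#S : ℝ) * (#S - 1) / 2 - #S * (2 ^ (k + 1) - 1)) 0 := by
        rcases le_total ((#S : ℝ) + 1 - 2 ^ (k + 1 + 1)) 0 with h | h
        · rw [hD, max_eq_right h]; simp
        · rw [hD, max_eq_left h]
          refine le_trans (le_of_eq ?_) (le_max_left _ _)
          ring
      calc #S * (D / 2 ^ (k + 2)) = #S * (D / 2) / 2 ^ (k + 1) := by field_simp; ring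
        _ ≤ _ := by
          refine div_le_div_of_nonneg_right ?_ (by positivity)
          refine (h6.trans h5).trans (le_of_eq ?_)
          refine sum_congr rfl fun x _ => ?_
          congr 1
          ring
    have h5 := (pow_le_pow_left₀ (by positivity) h4 (k + 1)).trans h3
    rw [mul_pow, pow_succ (#S : ℝ) k, mul_assoc] at h5
    have h6 := le_of_mul_le_mul_left h5 (by positivity)
    refine le_trans ?_ h6
    rw [pow_succ _ (k + 1), mul_comm]
    refine mul_le_mul_of_nonneg_right ?_ (by positivity)
    rw [div_le_iff₀ (by positivity)]
    exact hDS

lemma IsTournament.exists_isTransSeq (hT : IsTournament T) (k : ℕ) (S : Finset V)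
    (hS : 2 ^ k ≤ #S) : ∃ f : Fin k → V, (∀ i, f i ∈ S) ∧ IsTransSeq T f := by
  have h := hT.le_card_transSeqs k S
  have h1 : (2 : ℝ) ^ k ≤ #S := by exact_mod_cast hS
  have h2 : 0 < max ((#S : ℝ) + 1 - 2 ^ k) 0 := lt_max_of_lt_left (by linarith)
  have h3 : (0 : ℝ) < #(transSeqs T k S) := lt_of_lt_of_le (by positivity) h
  obtain ⟨f, hf⟩ := card_pos.1 (by exact_mod_cast h3)
  exact ⟨f, mem_transSeqs.1 hf⟩

lemma IsTournament.containsU_of_seqs (hT : IsTournament T) {t : ℕ} (f g h : Fin t → V)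
    (hf : IsTransSeq T f) (hg : IsTransSeq T g) (hh : IsTransSeq T h)
    (hfg : ∀ i j, T (f i) (g j)) (hgh : ∀ i j, T (g i) (h j)) (hhf : ∀ i j, T (h i) (f j)) :
    ContainsU T t := by
  have key : ∀ p q : Fin 3 × Fin t, UPat t p q → T (![f, g, h] p.1 p.2) (![f, g, h] q.1 q.2) := by
    rintro ⟨a, i⟩ ⟨b, j⟩ (⟨rfl, hij⟩ | hb)
    · fin_cases a
      · exact hf i j hij
      · exact hg i j hij
      · exact hh i j hij
    · simp only at hb
      subst hb
      fin_cases a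
      · exact hfg i j
      · exact hgh i j
      · exact hhf i j
  refine ⟨fun p => ![f, g, h] p.1 p.2, ?_, key⟩
  rintro ⟨a, i⟩ ⟨b, j⟩ hpq
  by_contra hne
  have hcases : UPat t (a, i) (b, j) ∨ UPat t (b, j) (a, i) := by
    by_cases hab : a = b
    · subst hab
      rcases lt_trichotomy i j with hij | rfl | hij
      · exact Or.inl (Or.inl ⟨rfl, hij⟩)
      · exact absurd rfl hne
      · exact Or.inr (Or.inl ⟨rfl, hij⟩)
    · have : b = a + 1 ∨ a = b + 1 := by
        clear hpq hne key
        fin_cases a <;> fin_cases b <;> simp_all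
      exact this.imp Or.inr Or.inr
  rcases hcases with h' | h'
  · have := key _ _ h'
    simp only at hpq this
    rw [hpq] at this
    exact hT.1 _ this
  · have := key _ _ h'
    simp only at hpq this
    rw [hpq] at this
    exact hT.1 _ this

lemma IsTournament.containsU_of_finsets (hT : IsTournament T) {t : ℕ} (A B C : Finset V)
    (hA : 2 ^ t ≤ #A) (hB : 2 ^ t ≤ #B) (hC : 2 ^ t ≤ #C)
    (hAB : ∀ a ∈ A, ∀ b ∈ B, T a b) (hBC : ∀ b ∈ B, ∀ c ∈ C, T b c)
    (hCA : ∀ c ∈ C, ∀ a ∈ A, T c a) : ContainsU T t := by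
  obtain ⟨f, hf, hf'⟩ := hT.exists_isTransSeq t A hA
  obtain ⟨g, hg, hg'⟩ := hT.exists_isTransSeq t B hB
  obtain ⟨h, hh, hh'⟩ := hT.exists_isTransSeq t C hC
  exact hT.containsU_of_seqs f g h hf' hg' hh' (fun i j => hAB _ (hf i) _ (hg j))
    (fun i j => hBC _ (hg i) _ (hh j)) (fun i j => hCA _ (hh i) _ (hf j))

end

lemma exists_card_common_neighbors {α β : Type*} (R : α → β → Prop) (F : Finset α)
    (B : Finset β) (c : ℝ) (M : ℕ) (hM : 1 ≤ M) (hc1 : c ≤ 1) (hF : 2 * M ≤ c * #F)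
    (h : ∀ f ∈ F, c * #B ≤ #(B.filter (R f))) :
    ∃ S ⊆ F, #S = M ∧ c / 2 ^ (#F + 1) * #B ≤ #(B.filter fun b => ∀ f ∈ S, R f b) := by
  have hF0 : (0 : ℝ) < #F := by
    rcases F.eq_empty_or_nonempty with rfl | hF'
    · simp only [card_empty, Nat.cast_zero, mul_zero] at hF
      have : (1 : ℝ) ≤ M := by exact_mod_cast hM
      linarith
    · exact_mod_cast hF'.card_pos
  set G := B.filter fun b => M ≤ #(F.filter fun f => R f b) with hG
  have hGcard : c / 2 * #B ≤ #G := by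
    have h1 : ∑ f ∈ F, #(B.filter (R f)) = ∑ b ∈ B, #(F.filter fun f => R f b) :=
      sum_card_bipartiteAbove_eq_sum_card_bipartiteBelow R
    have h2 : ∀ b ∈ B, #(F.filter fun f => R f b) ≤
        M + #F * (if M ≤ #(F.filter fun f => R f b) then 1 else 0) := by
      intro b _
      split_ifs with hb
      · have := card_filter_le F (fun f => R f b)
        omega
      · omega
    have h3 := sum_le_sum h2
    rw [← h1, sum_add_distrib, ← mul_sum, ← card_filter, sum_const, smul_eq_mul] at h3
    have h4 : (#F : ℝ) * (c * #B) ≤ ∑ f ∈ F, (#(B.filter (R f)) : ℝ) := by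
      rw [← nsmul_eq_mul]
      exact card_nsmul_le_sum _ _ _ h
    have h5 : (∑ f ∈ F, (#(B.filter (R f)) : ℝ)) ≤ #B * M + #F * #G := by exact_mod_cast h3
    have h6 : (#B : ℝ) * (2 * M) ≤ #B * (c * #F) := mul_le_mul_of_nonneg_left hF (by positivity)
    have h7 : (#F : ℝ) * (c / 2 * #B) ≤ #F * #G := by nlinarith
    exact le_of_mul_le_mul_left h7 hF0
  have hex : ∀ b ∈ G, ∃ S ∈ powersetCard M F, ∀ f ∈ S, R f b := by
    intro b hb
    obtain ⟨S, hS, hSM⟩ := exists_subset_card_eq (mem_filter.1 hb).2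
    exact ⟨S, mem_powersetCard.2 ⟨hS.trans (filter_subset _ _), hSM⟩,
      fun f hf => (mem_filter.1 (hS hf)).2⟩
  choose! g hg hg' using hex
  have hc : 0 < c := by
    have : (1 : ℝ) ≤ M := by exact_mod_cast hM
    by_contra! hc
    nlinarith
  have hMF : M ≤ #F := by
    have : (M : ℝ) ≤ #F := by nlinarith [(M.cast_nonneg : (0 : ℝ) ≤ M)]
    exact_mod_cast this
  have hne : (powersetCard M F).Nonempty := powersetCard_nonempty.2 hMF
  obtain ⟨S, hS, hSG⟩ := exists_le_card_fiber_of_nsmul_le_card_of_maps_to (M := ℝ)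
    (b := #G / (#(powersetCard M F) : ℝ)) hg hne (by
      rw [nsmul_eq_mul, mul_div_cancel₀]
      exact_mod_cast hne.card_pos.ne')
  refine ⟨S, (mem_powersetCard.1 hS).1, (mem_powersetCard.1 hS).2, ?_⟩
  have h1 : (#(powersetCard M F) : ℝ) ≤ 2 ^ #F := by
    rw [card_powersetCard]
    exact_mod_cast Nat.choose_le_two_pow _ _
  have h2 : (#(G.filter fun b => g b = S) : ℝ) ≤ #(B.filter fun b => ∀ f ∈ S, R f b) := by
    have : G.filter (fun b => g b = S) ⊆ B.filter fun b => ∀ f ∈ S, R f b := by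
      intro b hb
      obtain ⟨hb, hbS⟩ := mem_filter.1 hb
      exact mem_filter.2 ⟨(mem_filter.1 hb).1, hbS ▸ hg' b hb⟩
    exact_mod_cast card_le_card this
  refine le_trans ?_ (hSG.trans h2)
  rw [le_div_iff₀ (by exact_mod_cast hne.card_pos)]
  calc c / 2 ^ (#F + 1) * #B * #(powersetCard M F)
      ≤ c / 2 ^ (#F + 1) * #B * 2 ^ #F := by gcongr
    _ = c / 2 * #B := by field_simp; ring
    _ ≤ #G := hGcard

/-- A bipartite Ramsey theorem. -/
lemma exists_monochromatic_product {κ : Type*} [Fintype κ] [Nonempty κ] (M : ℕ) (hM : 1 ≤ M) :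
    ∃ N, ∀ φ : ℕ → ℕ → κ, ∃ a, ∃ S ⊆ range N, ∃ S' ⊆ range N, #S = M ∧ #S' = M ∧
      ∀ p ∈ S, ∀ q ∈ S', φ p q = a := by
  set k := Fintype.card κ with hk
  have hk0 : 0 < k := Fintype.card_pos
  set P := k * M with hP
  refine ⟨k * 2 ^ P * M, fun φ => ?_⟩
  have hex : ∀ q, ∃ x : κ × Finset ℕ, x ∈ (univ : Finset κ) ×ˢ (range P).powerset ∧
      #x.2 = M ∧ ∀ p ∈ x.2, φ p q = x.1 := by
    intro q
    obtain ⟨a, -, ha⟩ := exists_le_card_fiber_of_mul_le_card_of_maps_to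
      (s := range P) (t := (univ : Finset κ)) (f := fun p => φ p q) (n := M)
      (fun _ _ => mem_univ _) univ_nonempty (by simp [hP, hk])
    obtain ⟨S, hS, hSM⟩ := exists_subset_card_eq ha
    refine ⟨(a, S), ?_, hSM, fun p hp => (mem_filter.1 (hS hp)).2⟩
    simp only [mem_product, mem_univ, mem_powerset, true_and]
    exact hS.trans (filter_subset _ _)
  choose g hg hgM hg' using hex
  obtain ⟨⟨a, S⟩, haS, hfib⟩ := exists_le_card_fiber_of_mul_le_card_of_maps_to
    (s := range (k * 2 ^ P * M)) (t := (univ : Finset κ) ×ˢ (range P).powerset) (f := g) (n := M)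
    (fun q _ => hg q) ⟨_, hg 0⟩ (by simp [hk])
  obtain ⟨S', hS', hSM'⟩ := exists_subset_card_eq hfib
  have hval : ∀ q ∈ S', g q = (a, S) := fun q hq => (mem_filter.1 (hS' hq)).2
  have hS'ne : S'.Nonempty := card_pos.1 (by omega)
  obtain ⟨q₀, hq₀⟩ := hS'ne
  refine ⟨a, S, ?_, S', hS'.trans (filter_subset _ _), ?_, hSM', ?_⟩
  · have : S ⊆ range P := by simpa using (mem_product.1 haS).2
    refine this.trans (range_subset_range.2 ?_)
    calc P = k * 1 * M := by simp [hP]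
      _ ≤ k * 2 ^ P * M := by gcongr; exact Nat.one_le_two_pow
  · simpa [hval q₀ hq₀] using hgM q₀
  · intro p hp q hq
    have h1 := hg' q
    rw [hval q hq] at h1
    exact h1 p hp

lemma IsTournament.exists_transSeq_common {V β : Type*} {T : V → V → Prop} (hT : IsTournament T)
    (s M m : ℕ) (hs : 1 ≤ s) (hM : 1 ≤ M) (hm : 1 ≤ m) (X : Finset V) (Y : Finset β)
    (hX : #X ≤ m) (hY : #Y ≤ m) (R : V → β → Prop)
    (hR : 2 ^ (s + 1) * M * (m : ℝ) ^ ((2 : ℝ) - 1 / s) ≤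
      #((X ×ˢ Y).filter fun p => R p.1 p.2)) :
    ∃ f : Fin s → V, (∀ i, f i ∈ X) ∧ IsTransSeq T f ∧
      M ≤ #(Y.filter fun y => ∀ i, R (f i) y) := by
  by_contra! hcon
  obtain ⟨k, rfl⟩ : ∃ k, s = k + 1 := ⟨s - 1, by omega⟩
  set d : β → ℝ := fun y => #(X.filter fun x => R x y) with hd
  have hm0 : (0 : ℝ) < m := by exact_mod_cast hm
  have hsum : ∑ y ∈ Y, d y = #((X ×ˢ Y).filter fun p => R p.1 p.2) := by
    simp only [hd]
    rw [card_filter, sum_product_right]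
    push_cast
    refine sum_congr rfl fun y _ => ?_
    rw [card_filter]
    push_cast
    rfl
  have hdc : ∑ y ∈ Y, #(transSeqs T (k + 1) (X.filter fun x => R x y)) =
      ∑ f ∈ transSeqs T (k + 1) X, #(Y.filter fun y => ∀ i, R (f i) y) := by
    have := sum_card_bipartiteAbove_eq_sum_card_bipartiteBelow (s := transSeqs T (k + 1) X)
      (t := Y) (fun f y => ∀ i, R (f i) y)
    simp only [bipartiteAbove, bipartiteBelow] at this
    rw [this]
    refine sum_congr rfl fun y _ => ?_
    congr 1
    ext f
    simp only [mem_transSeqs, mem_filter, forall_and]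
    tauto
  have hub : (∑ f ∈ transSeqs T (k + 1) X, #(Y.filter fun y => ∀ i, R (f i) y)) <
      M * m ^ (k + 1) := by
    have h1 : ∀ f ∈ transSeqs T (k + 1) X, #(Y.filter fun y => ∀ i, R (f i) y) ≤ M - 1 := by
      intro f hf
      have := hcon f (mem_transSeqs.1 hf).1 (mem_transSeqs.1 hf).2
      omega
    calc _ ≤ #(transSeqs T (k + 1) X) * (M - 1) := by
          simpa using sum_le_card_nsmul _ _ _ h1
      _ ≤ m ^ (k + 1) * (M - 1) :=
          Nat.mul_le_mul_right _ ((card_transSeqs_le _ _).trans (Nat.pow_le_pow_left hX _))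
      _ < m ^ (k + 1) * M := by
          refine Nat.mul_lt_mul_of_pos_left ?_ (by positivity)
          omega
      _ = _ := mul_comm _ _
  rw [← hdc] at hub
  have hlb : ∑ y ∈ Y, (max (d y + 1 - 2 ^ (k + 1)) 0 / 2 ^ (k + 1)) ^ (k + 1) <
      M * (m : ℝ) ^ (k + 1) := by
    refine lt_of_le_of_lt (sum_le_sum fun y _ => hT.le_card_transSeqs _ _) ?_
    exact_mod_cast hub
  have hpm := pow_sum_le_card_pow_mul Y (fun y => max (d y + 1 - 2 ^ (k + 1)) 0 / 2 ^ (k + 1))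
    (fun y _ => by positivity) k
  have hYm : (#Y : ℝ) ^ k ≤ (m : ℝ) ^ k :=
    pow_le_pow_left₀ (by positivity) (by exact_mod_cast hY) k
  set r : ℝ := (m : ℝ) ^ ((2 : ℝ) - 1 / ((k + 1 : ℕ) : ℝ)) with hr
  have hr0 : 0 < r := by positivity
  have hrpow : r ^ (k + 1) = (m : ℝ) ^ k * (m : ℝ) ^ (k + 1) := by
    rw [hr, ← Real.rpow_natCast, ← Real.rpow_mul hm0.le, ← pow_add, ← Real.rpow_natCast]
    congr 1
    push_cast
    field_simp
    ring
  have hmr : (m : ℝ) ≤ r := by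
    have h1 : (1 : ℝ) ≤ (2 : ℝ) - 1 / ((k + 1 : ℕ) : ℝ) := by
      have : (1 : ℝ) / ((k + 1 : ℕ) : ℝ) ≤ 1 := by
        rw [div_le_one (by positivity)]
        exact_mod_cast Nat.le_add_left 1 k
      linarith
    calc (m : ℝ) = (m : ℝ) ^ (1 : ℝ) := (Real.rpow_one _).symm
      _ ≤ r := Real.rpow_le_rpow_of_exponent_le (by exact_mod_cast hm) h1
  have hsum2 : M * r ≤ ∑ y ∈ Y, max (d y + 1 - 2 ^ (k + 1)) 0 / 2 ^ (k + 1) := by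
    rw [← sum_div, le_div_iff₀ (by positivity)]
    have h1 := le_sum_max_sub Y d (2 ^ (k + 1) - 1)
    have h2 : ∑ x ∈ Y, max (d x - (2 ^ (k + 1) - 1)) 0 =
        ∑ y ∈ Y, max (d y + 1 - 2 ^ (k + 1)) 0 :=
      sum_congr rfl fun y _ => by congr 1; ring
    rw [h2] at h1
    refine le_trans ?_ ((le_max_left _ _).trans h1)
    rw [hsum]
    have h3 : (#Y : ℝ) ≤ m := by exact_mod_cast hY
    have h4 : (1 : ℝ) ≤ M := by exact_mod_cast hM
    have h5 : (0 : ℝ) ≤ 2 ^ (k + 1) - 1 := sub_nonneg.2 (one_le_pow₀ (by norm_num))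
    have h6 : (#Y : ℝ) * (2 ^ (k + 1) - 1) ≤ (M * r) * 2 ^ (k + 1) := by
      have h7 : (#Y : ℝ) ≤ M * r := by nlinarith
      exact mul_le_mul h7 (by linarith) h5 (by positivity)
    have h8 : 2 ^ (k + 1 + 1) * (M : ℝ) * r = 2 * ((M * r) * 2 ^ (k + 1)) := by ring
    rw [h8] at hR
    linarith
  have h1 := (pow_le_pow_left₀ (by positivity) hsum2 (k + 1)).trans hpm
  rw [mul_pow, hrpow] at h1
  have h2 : (m : ℝ) ^ k * ∑ y ∈ Y, (max (d y + 1 - 2 ^ (k + 1)) 0 / 2 ^ (k + 1)) ^ (k + 1) <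
      (m : ℝ) ^ k * (M * (m : ℝ) ^ (k + 1)) := mul_lt_mul_of_pos_left hlb (by positivity)
  have h3 : (M : ℝ) ≤ (M : ℝ) ^ (k + 1) :=
    le_self_pow₀ (by exact_mod_cast hM) (by omega)
  have h4 := h1.trans_lt (lt_of_le_of_lt (mul_le_mul_of_nonneg_right hYm
    (sum_nonneg fun y _ => by positivity)) h2)
  have h5 : (M : ℝ) * ((m : ℝ) ^ k * (m : ℝ) ^ (k + 1)) ≤
      (M : ℝ) ^ (k + 1) * ((m : ℝ) ^ k * (m : ℝ) ^ (k + 1)) :=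
    mul_le_mul_of_nonneg_right h3 (by positivity)
  linarith [mul_left_comm ((m : ℝ) ^ k) (M : ℝ) ((m : ℝ) ^ (k + 1))]

/-- The pairs `(o, i)` in `W` for which `v → o → i → v` is a cyclic triangle. -/
noncomputable def cyclicPairs {V : Type*} (T : V → V → Prop) (W : Finset V) (v : V) :
    Finset (V × V) :=
  (W ×ˢ W).filter fun p => T v p.1 ∧ T p.1 p.2 ∧ T p.2 v

lemma exists_containsU_of_cyclicPairs (t : ℕ) (c : ℝ) (hc : 0 < c) (hc1 : c ≤ 1) :
    ∃ Q : ℕ, ∀ {V : Type} {T : V → V → Prop}, IsTournament T → ∀ W F : Finset V, F ⊆ W →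
      Q ≤ #F → (∀ v ∈ F, c * #W ^ 2 ≤ #(cyclicPairs T W v)) → ContainsU T t := by
  set M := 2 ^ t with hM
  have hM1 : 1 ≤ M := Nat.one_le_two_pow
  set Q₀ := ⌈2 * M / c⌉₊ with hQ₀
  set c₁ := c / 2 ^ (Q₀ + 1) / 2 with hc₁
  have hc₁0 : 0 < c₁ := by positivity
  have hc₁1 : c₁ ≤ 1 := by
    have : (1 : ℝ) ≤ 2 ^ (Q₀ + 1) := one_le_pow₀ (by norm_num)
    rw [hc₁, div_div, div_le_one (by positivity)]
    linarith
  set Q₁ := ⌈2 * M / c₁⌉₊ with hQ₁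
  set c₂ := c₁ / 2 ^ (Q₁ + 1) with hc₂
  have hc₂0 : 0 < c₂ := by positivity
  refine ⟨Q₀ + ⌈Q₁ / c₁⌉₊ + ⌈M / c₂⌉₊, fun {V T} hT W F hFW hF htri => ?_⟩
  have hWF := card_le_card hFW
  have hL1 : Q₁ ≤ c₁ * #W := by
    rw [← div_le_iff₀' hc₁0]
    refine (Nat.le_ceil _).trans ?_
    exact_mod_cast (by omega : ⌈Q₁ / c₁⌉₊ ≤ #W)
  have hL2 : M ≤ c₂ * #W := by
    rw [← div_le_iff₀' hc₂0]
    refine (Nat.le_ceil _).trans ?_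
    exact_mod_cast (by omega : ⌈M / c₂⌉₊ ≤ #W)
  obtain ⟨F₀, hF₀, hF₀Q⟩ := exists_subset_card_eq (show Q₀ ≤ #F by omega)
  obtain ⟨A, hA, hAM, hAc⟩ := exists_card_common_neighbors
    (fun v (p : V × V) => T v p.1 ∧ T p.1 p.2 ∧ T p.2 v) F₀ (W ×ˢ W) c M hM1 hc1
    (by
      rw [hF₀Q, ← div_le_iff₀' hc]
      exact Nat.le_ceil _)
    (fun v hv => by
      have := htri v (hF₀ hv)
      rw [card_product]
      push_cast
      rw [← sq]
      unfold cyclicPairs at this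
      convert this)
  rw [hF₀Q] at hAc
  set P := (W ×ˢ W).filter fun p => ∀ v ∈ A, T v p.1 ∧ T p.1 p.2 ∧ T p.2 v with hP
  replace hAc : c / 2 ^ (Q₀ + 1) * #(W ×ˢ W) ≤ #P := by convert hAc
  set F₁ := W.filter fun o => c₁ * #W ≤ #(W.filter fun i => (o, i) ∈ P) with hF₁
  have hsum : #P = ∑ o ∈ W, #(W.filter fun i => (o, i) ∈ P) := by
    have : P = (W ×ˢ W).filter (fun p => p ∈ P) := by
      ext p
      simp only [hP, mem_filter]
      tauto
    rw [this, card_filter, sum_product]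
    refine sum_congr rfl fun o _ => ?_
    rw [card_filter, ← this]
  have hF₁c : c₁ * #W ≤ #F₁ := by
    have h1 : ∀ o ∈ W, (#(W.filter fun i => (o, i) ∈ P) : ℝ) ≤
        c₁ * #W + #W * (if c₁ * #W ≤ #(W.filter fun i => (o, i) ∈ P) then 1 else 0) := by
      intro o _
      have h2 : (#(W.filter fun i => (o, i) ∈ P) : ℝ) ≤ #W := by
        exact_mod_cast card_filter_le _ _
      split_ifs with h
      · have : 0 ≤ c₁ * #W := by positivity
        linarith
      · push Not at h
        linarith
    have h2 := sum_le_sum h1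
    rw [sum_add_distrib, sum_const, nsmul_eq_mul, ← mul_sum] at h2
    have h3 : (∑ o ∈ W, (if c₁ * #W ≤ #(W.filter fun i => (o, i) ∈ P) then (1 : ℝ) else 0)) =
        #F₁ := by
      rw [hF₁, card_filter]
      push_cast
      rfl
    rw [h3] at h2
    have h4 : (#P : ℝ) = ∑ o ∈ W, (#(W.filter fun i => (o, i) ∈ P) : ℝ) := by exact_mod_cast hsum
    rw [← h4] at h2
    rw [card_product] at hAc
    push_cast at hAc
    have h5 : c / 2 ^ (Q₀ + 1) = 2 * c₁ := by rw [hc₁]; ring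
    rw [h5] at hAc
    have h6 : (0 : ℝ) < #W := by
      have h7 : (1 : ℝ) ≤ M := by exact_mod_cast hM1
      by_contra! h
      nlinarith
    have h7 : (#W : ℝ) * (c₁ * #W) ≤ #W * #F₁ := by nlinarith
    exact le_of_mul_le_mul_left h7 h6
  have hF₁Q : Q₁ ≤ #F₁ := by exact_mod_cast hL1.trans hF₁c
  obtain ⟨F₂, hF₂, hF₂Q⟩ := exists_subset_card_eq hF₁Q
  obtain ⟨B, hB, hBM, hBc⟩ := exists_card_common_neighbors
    (fun o i => (o, i) ∈ P) F₂ W c₁ M hM1 hc₁1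
    (by
      rw [hF₂Q, ← div_le_iff₀' hc₁0]
      exact Nat.le_ceil _)
    (fun o ho => by convert (mem_filter.1 (hF₂ ho)).2)
  rw [hF₂Q] at hBc
  set C := W.filter fun i => ∀ o ∈ B, (o, i) ∈ P with hC
  have hBc' : c₂ * #W ≤ #C := by convert hBc
  have hCM : M ≤ #C := by exact_mod_cast hL2.trans hBc'
  have hall : ∀ v ∈ A, ∀ o ∈ B, ∀ i ∈ C, T v o ∧ T o i ∧ T i v := by
    intro v hv o ho i hi
    exact (mem_filter.1 ((mem_filter.1 hi).2 o ho)).2 v hv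
  obtain ⟨v₀, hv₀⟩ := card_pos.1 (show 0 < #A by omega)
  obtain ⟨o₀, ho₀⟩ := card_pos.1 (show 0 < #B by omega)
  obtain ⟨i₀, hi₀⟩ := card_pos.1 (show 0 < #C by omega)
  exact hT.containsU_of_finsets A B C hAM.ge hBM.ge hCM
    (fun v hv o ho => (hall v hv o ho i₀ hi₀).1) (fun o ho i hi => (hall v₀ hv₀ o ho i hi).2.1)
    (fun i hi v hv => (hall v hv o₀ ho₀ i hi).2.2)

lemma sq_card_le_two_mul_card_pairs {α : Type*} (r : α → α → Prop) (hr : ∀ x y, r x y ∨ r y x)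
    (I O : Finset α)
    (h : ∀ x ∈ I, #(I.filter fun y => r y x) ≤ #(O.filter fun y => r y x)) :
    #I ^ 2 ≤ 2 * #((O ×ˢ I).filter fun p => r p.1 p.2) := by
  have h1 : #((O ×ˢ I).filter fun p => r p.1 p.2) = ∑ x ∈ I, #(O.filter fun y => r y x) := by
    rw [card_filter, sum_product_right]
    exact sum_congr rfl fun x _ => (card_filter _ _).symm
  have h2 : ∑ x ∈ I, #(I.filter fun y => r y x) = ∑ x ∈ I, #(I.filter fun y => r x y) :=
    (sum_card_bipartiteAbove_eq_sum_card_bipartiteBelow (s := I) (t := I) r).symm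
  have h3 : ∀ x ∈ I, #I ≤ #(I.filter fun y => r y x) + #(I.filter fun y => r x y) := by
    intro x _
    refine le_trans (card_le_card ?_) (card_union_le _ _)
    intro y hy
    rcases hr x y with hxy | hxy
    · exact mem_union_right _ (mem_filter.2 ⟨hy, hxy⟩)
    · exact mem_union_left _ (mem_filter.2 ⟨hy, hxy⟩)
  have h4 := sum_le_sum h3
  rw [sum_add_distrib, ← h2, sum_const, smul_eq_mul] at h4
  have h5 := sum_le_sum h
  rw [h1]
  nlinarith

/-- The backward edges (in the natural order) between a vertex of `A` and a later one of `B`. -/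
noncomputable def backPairs (T : ℕ → ℕ → Prop) (A B : Finset ℕ) : Finset (ℕ × ℕ) :=
  (A ×ˢ B).filter fun p => p.1 < p.2 ∧ T p.2 p.1

lemma mem_backPairs {T : ℕ → ℕ → Prop} {A B : Finset ℕ} {p : ℕ × ℕ} :
    p ∈ backPairs T A B ↔ p.1 ∈ A ∧ p.2 ∈ B ∧ p.1 < p.2 ∧ T p.2 p.1 := by
  simp [backPairs, and_assoc]

/-- Reordering the vertices of an interval never decreases the number of backward edges
inside this interval. -/
def IsLocallyOptimal (T : ℕ → ℕ → Prop) : Prop :=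
  ∀ a b, ∀ g : ℕ → ℕ, Set.InjOn g (Ico a b : Finset ℕ) →
    #(backPairs T (Ico a b) (Ico a b)) ≤
      #((Ico a b ×ˢ Ico a b).filter fun p => g p.1 < g p.2 ∧ T p.2 p.1)

lemma IsLocallyOptimal.card_in_le_card_out {T : ℕ → ℕ → Prop} (hO : IsLocallyOptimal T)
    (v b : ℕ) :
    #((Ico (v + 1) b).filter fun y => T y v) ≤ #((Ico (v + 1) b).filter fun y => T v y) := by
  have h := hO v b (fun x => if x = v then b else x) (by
    intro x hx y hy hxy
    simp only [coe_Ico, Set.mem_Ico] at hx hy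
    simp only at hxy
    split_ifs at hxy <;> omega)
  set D := backPairs T (Ico (v + 1) b) (Ico (v + 1) b) with hD
  have h1 : D.disjUnion (((Ico (v + 1) b).filter fun y => T y v).map
      ⟨fun y => (v, y), fun x y hxy => by simpa using hxy⟩) (by
        rw [disjoint_left]
        rintro ⟨i, j⟩ h1 h2
        simp only [hD, mem_backPairs, mem_Ico, mem_map, mem_filter] at h1 h2
        obtain ⟨y, -, h3⟩ := h2
        obtain ⟨rfl, -⟩ := Prod.mk.inj h3
        omega) ⊆ backPairs T (Ico v b) (Ico v b) := by
    rintro ⟨i, j⟩ hij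
    simp only [hD, mem_disjUnion, mem_backPairs, mem_Ico, mem_map, mem_filter]
      at hij ⊢
    rcases hij with h1 | ⟨y, ⟨h1, h2⟩, h3⟩
    · refine ⟨by omega, by omega, h1.2.2.1, h1.2.2.2⟩
    · obtain ⟨rfl, rfl⟩ := Prod.mk.inj h3
      refine ⟨by omega, by omega, by omega, h2⟩
  have h2 : ((Ico v b ×ˢ Ico v b).filter fun p =>
      (if p.1 = v then b else p.1) < (if p.2 = v then b else p.2) ∧ T p.2 p.1) ⊆
      D ∪ ((Ico (v + 1) b).filter fun y => T v y).image fun y => (y, v) := by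
    rintro ⟨i, j⟩ hij
    simp only [hD, mem_union, mem_backPairs, mem_Ico, mem_image, mem_filter, mem_product,
      Prod.mk.injEq] at hij ⊢
    obtain ⟨⟨hi, hj⟩, hlt, hTij⟩ := hij
    split_ifs at hlt with h3 h4 h4
    · omega
    · omega
    · subst h4
      exact Or.inr ⟨i, ⟨by omega, hTij⟩, rfl, rfl⟩
    · exact Or.inl ⟨by omega, by omega, hlt, hTij⟩
  have h3 := card_le_card h1
  have h4 := (card_le_card h2).trans (card_union_le _ _)
  rw [card_disjUnion, card_map] at h3
  have h5 := card_image_le (s := (Ico (v + 1) b).filter fun y => T v y) (f := fun y => (y, v))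
  omega

lemma IsLocallyOptimal.card_out_le_card_in {T : ℕ → ℕ → Prop} (hO : IsLocallyOptimal T)
    (a v : ℕ) :
    #((Ico a v).filter fun y => T v y) ≤ #((Ico a v).filter fun y => T y v) := by
  rcases le_or_gt v a with hva | hva
  · simp [Ico_eq_empty_of_le hva]
  have h := hO a (v + 1) (fun x => if x = v then 0 else x + 1) (by
    intro x hx y hy hxy
    simp only [coe_Ico, Set.mem_Ico] at hx hy
    simp only at hxy
    split_ifs at hxy <;> omega)
  set D := backPairs T (Ico a v) (Ico a v) with hD
  have h1 : D.disjUnion (((Ico a v).filter fun y => T v y).map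
      ⟨fun y => (y, v), fun x y hxy => by simpa using hxy⟩) (by
        rw [disjoint_left]
        rintro ⟨i, j⟩ h1 h2
        simp only [hD, mem_backPairs, mem_Ico, mem_map, mem_filter] at h1 h2
        obtain ⟨y, -, h3⟩ := h2
        obtain ⟨-, rfl⟩ := Prod.mk.inj h3
        omega) ⊆ backPairs T (Ico a (v + 1)) (Ico a (v + 1)) := by
    rintro ⟨i, j⟩ hij
    simp only [hD, mem_disjUnion, mem_backPairs, mem_Ico, mem_map, mem_filter]
      at hij ⊢
    rcases hij with h1 | ⟨y, ⟨h1, h2⟩, h3⟩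
    · refine ⟨by omega, by omega, h1.2.2.1, h1.2.2.2⟩
    · obtain ⟨rfl, rfl⟩ := Prod.mk.inj h3
      refine ⟨by omega, by omega, by omega, h2⟩
  have h2 : ((Ico a (v + 1) ×ˢ Ico a (v + 1)).filter fun p =>
      (if p.1 = v then 0 else p.1 + 1) < (if p.2 = v then 0 else p.2 + 1) ∧ T p.2 p.1) ⊆
      D ∪ ((Ico a v).filter fun y => T y v).image fun y => (v, y) := by
    rintro ⟨i, j⟩ hij
    simp only [hD, mem_union, mem_backPairs, mem_Ico, mem_image, mem_filter, mem_product,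
      Prod.mk.injEq] at hij ⊢
    obtain ⟨⟨hi, hj⟩, hlt, hTij⟩ := hij
    split_ifs at hlt with h3 h4 h4
    · omega
    · subst h3
      exact Or.inr ⟨j, ⟨by omega, hTij⟩, rfl, rfl⟩
    · omega
    · exact Or.inl ⟨by omega, by omega, by omega, hTij⟩
  have h3 := card_le_card h1
  have h4 := (card_le_card h2).trans (card_union_le _ _)
  rw [card_disjUnion, card_map] at h3
  have h5 := card_image_le (s := (Ico a v).filter fun y => T y v) (f := fun y => (v, y))
  omega

lemma IsTournament.card_twins_le {V : Type*} {T : V → V → Prop} (hT : IsTournament T)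
    (u : V) (S : Finset V) (x : ℝ) (hx : 0 ≤ x)
    (h₁ : ∀ v ∈ S, #(S.filter fun w => T v w ∧ ¬ T u w) ≤ x)
    (h₂ : ∀ v ∈ S, #(S.filter fun w => T u w ∧ ¬ T v w) ≤ x) : #S ≤ 8 * x + 2 := by
  set P := S.filter (T u) with hP
  set Q := S.filter (fun w => ¬ T u w) with hQ
  have hPQ : #P + #Q = #S := card_filter_add_card_filter_not _
  have hQsum : ∑ v ∈ Q, (#(Q.filter (T v)) : ℝ) ≤ #S * x := by
    calc ∑ v ∈ Q, (#(Q.filter (T v)) : ℝ)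
        ≤ ∑ v ∈ Q, (#(S.filter fun w => T v w ∧ ¬ T u w) : ℝ) := by
          refine sum_le_sum fun v _ => ?_
          have : Q.filter (T v) ⊆ S.filter fun w => T v w ∧ ¬ T u w := by
            intro w
            simp only [hQ, mem_filter]
            tauto
          exact_mod_cast card_le_card this
      _ ≤ ∑ v ∈ S, (#(S.filter fun w => T v w ∧ ¬ T u w) : ℝ) :=
          sum_le_sum_of_subset_of_nonneg (filter_subset _ _) fun _ _ _ => by positivity
      _ ≤ #S * x := by simpa using sum_le_card_nsmul _ _ _ h₁
  have hPsum : ∑ v ∈ P, (#(P.filter fun w => ¬ T v w) : ℝ) ≤ #S * x := by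
    calc ∑ v ∈ P, (#(P.filter fun w => ¬ T v w) : ℝ)
        ≤ ∑ v ∈ P, (#(S.filter fun w => T u w ∧ ¬ T v w) : ℝ) := by
          refine sum_le_sum fun v _ => ?_
          have : P.filter (fun w => ¬ T v w) ⊆ S.filter fun w => T u w ∧ ¬ T v w := by
            intro w
            simp only [hP, mem_filter]
            tauto
          exact_mod_cast card_le_card this
      _ ≤ ∑ v ∈ S, (#(S.filter fun w => T u w ∧ ¬ T v w) : ℝ) :=
          sum_le_sum_of_subset_of_nonneg (filter_subset _ _) fun _ _ _ => by positivity
      _ ≤ #S * x := by simpa using sum_le_card_nsmul _ _ _ h₂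
  have hPsum' : ∑ v ∈ P, (#(P.filter (T v)) : ℝ) + ∑ v ∈ P, (#(P.filter fun w => ¬ T v w) : ℝ) =
      #P * #P := by
    rw [← sum_add_distrib]
    have : ∀ v ∈ P, (#(P.filter (T v)) : ℝ) + #(P.filter fun w => ¬ T v w) = #P := by
      intro v _
      exact_mod_cast card_filter_add_card_filter_not _
    rw [sum_congr rfl this]
    simp
  have hP2 : 2 * ∑ v ∈ P, (#(P.filter (T v)) : ℝ) + #P = #P * #P := by
    exact_mod_cast hT.two_mul_sum_card P
  have hQ2 : 2 * ∑ v ∈ Q, (#(Q.filter (T v)) : ℝ) + #Q = #Q * #Q := by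
    exact_mod_cast hT.two_mul_sum_card Q
  have hPQ' : (#P : ℝ) + #Q = #S := by exact_mod_cast hPQ
  have hp : (0 : ℝ) ≤ #P := by positivity
  have hq : (0 : ℝ) ≤ #Q := by positivity
  have key : (#S : ℝ) * #S ≤ #S * (8 * x + 2) := by
    nlinarith [sq_nonneg ((#P : ℝ) - #Q)]
  rcases (Nat.cast_nonneg (#S) : (0 : ℝ) ≤ #S).eq_or_lt with h | h
  · rw [← h]; positivity
  · exact le_of_mul_le_mul_left key h

lemma IsLocallyOptimal.card_backPairs_le_of_sum (ε : ℝ) (hε : 0 < ε) :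
    ∃ c : ℝ, 0 < c ∧ ∃ L₀ : ℕ, ∀ T : ℕ → ℕ → Prop, IsTournament T → IsLocallyOptimal T →
      ∀ a b, L₀ ≤ #(Ico a b) →
        ∑ v ∈ Ico a b, (#(cyclicPairs T (Ico a b) v) : ℝ) ≤ c * (#(Ico a b) : ℝ) ^ 3 →
        #(backPairs T (Ico a b) (Ico a b)) ≤ ε * (#(Ico a b) : ℝ) ^ 2 := by
  refine ⟨ε * (ε / 32) / 4, by positivity, ⌈4 / ε⌉₊, fun T hT hO a b hL hsum => ?_⟩
  set W := Ico a b with hW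
  set L : ℝ := ((#W : ℕ) : ℝ) with hLdef
  set x : ℝ := ε / 32 * L with hx
  have hL4 : 4 ≤ ε * L := by
    rw [← div_le_iff₀' hε]
    exact (Nat.le_ceil _).trans (by rw [hLdef]; exact_mod_cast hL)
  have hL0 : 0 < L := by
    by_contra! h
    nlinarith
  have hx0 : 0 < x := by positivity
  set d : ℕ → ℕ := fun v => #(W.filter (T v)) with hd
  set D : ℕ → ℕ → ℕ := fun u v => #(W.filter fun w => T v w ∧ ¬ T u w) with hD
  have hdW : ∀ v, d v ≤ #W := fun v => card_filter_le _ _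
  have hdD : ∀ u v, d v + D v u = d u + D u v := by
    intro u v
    have h1 : ∀ u v, d v = #(W.filter fun w => T v w ∧ T u w) + D u v := by
      intro u v
      have := card_filter_add_card_filter_not (s := W.filter (T v)) (T u)
      rw [filter_filter, filter_filter] at this
      exact this.symm
    have h2 := h1 u v
    have h3 := h1 v u
    have h4 : (W.filter fun w => T v w ∧ T u w) = W.filter fun w => T u w ∧ T v w := by
      simp only [and_comm]
    rw [h4] at h2
    omega
  set g : ℕ → ℕ := fun v => (#W - d v) * b + v with hg
  have hlt : ∀ p ∈ W, ∀ q ∈ W, g p < g q → d q ≤ d p := by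
    intro p hp q hq hpq
    by_contra! hlt
    have hq' := (mem_Ico.1 hq).2
    have h1 : #W - d q + 1 ≤ #W - d p := by
      have := hdW q
      omega
    have h2 : (#W - d q + 1) * b ≤ (#W - d p) * b := Nat.mul_le_mul_right _ h1
    simp only [hg] at hpq
    rw [add_mul, one_mul] at h2
    omega
  have hginj : Set.InjOn g (Ico a b : Finset ℕ) := by
    intro p hp q hq hpq
    simp only [coe_Ico, Set.mem_Ico] at hp hq
    simp only [hg] at hpq
    have h1 := congrArg (· % b) hpq
    simpa [Nat.mul_add_mod', Nat.mod_eq_of_lt hp.2, Nat.mod_eq_of_lt hq.2] using h1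
  have hback := hO a b g hginj
  rw [← hW] at hback
  set E := (W ×ˢ W).filter fun p => T p.2 p.1 ∧ x < D p.2 p.1 with hE
  set S : ℕ → Finset ℕ := fun u => W.filter fun v => (D u v : ℝ) ≤ x ∧ (D v u : ℝ) ≤ x with hS
  have hsub : ((W ×ˢ W).filter fun p => g p.1 < g p.2 ∧ T p.2 p.1) ⊆
      E ∪ (W ×ˢ W).filter fun p => p.1 ∈ S p.2 := by
    rintro ⟨i, j⟩ hij
    simp only [hE, hS, mem_union, mem_filter, mem_product] at hij ⊢
    obtain ⟨⟨hi, hj⟩, hgij, hTji⟩ := hij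
    by_cases hxD : x < D j i
    · exact Or.inl ⟨⟨hi, hj⟩, hTji, hxD⟩
    · push Not at hxD
      refine Or.inr ⟨⟨hi, hj⟩, hi, hxD, ?_⟩
      have h1 := hlt i hi j hj hgij
      have h2 := hdD j i
      have h3 : (D i j : ℝ) ≤ D j i := by exact_mod_cast (by omega : D i j ≤ D j i)
      exact h3.trans hxD
  have hScard : ∀ u, (#(S u) : ℝ) ≤ 8 * x + 2 := by
    intro u
    refine hT.card_twins_le u (S u) x hx0.le ?_ ?_
    · intro v hv
      refine le_trans ?_ (mem_filter.1 hv).2.1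
      exact_mod_cast card_le_card (filter_subset_filter _ (filter_subset _ _))
    · intro v hv
      refine le_trans ?_ (mem_filter.1 hv).2.2
      exact_mod_cast card_le_card (filter_subset_filter _ (filter_subset _ _))
  have hEcard : (#E : ℝ) * x ≤ ∑ v ∈ W, (#(cyclicPairs T W v) : ℝ) := by
    have h1 : (#E : ℝ) * x ≤ ∑ p ∈ E, (D p.2 p.1 : ℝ) := by
      rw [← nsmul_eq_mul]
      exact card_nsmul_le_sum _ _ _ fun p hp => (mem_filter.1 hp).2.2.le
    refine h1.trans ?_
    have h2 : ∑ p ∈ E, D p.2 p.1 ≤ ∑ v ∈ W, #(cyclicPairs T W v) := by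
      rw [← card_sigma, ← card_sigma]
      refine card_le_card_of_injOn (fun z => ⟨z.1.1, (z.2, z.1.2)⟩) ?_ ?_
      · rintro ⟨⟨v, u⟩, w⟩ hz
        simp only [hE, coe_sigma, Set.mem_sigma_iff, mem_coe, mem_filter, mem_product,
          cyclicPairs] at hz ⊢
        obtain ⟨⟨⟨hv, hu⟩, hTuv, -⟩, hw, hTvw, hTuw⟩ := hz
        refine ⟨hv, ⟨hw, hu⟩, hTvw, ?_, hTuv⟩
        refine hT.of_not ?_ hTuw
        rintro rfl
        exact hT.asymm hTuv hTvw
      · rintro ⟨⟨v, u⟩, w⟩ _ ⟨⟨v', u'⟩, w'⟩ _ h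
        simp only [Sigma.mk.injEq, heq_eq_eq, Prod.mk.injEq] at h
        obtain ⟨rfl, rfl, rfl⟩ := h
        rfl
    exact_mod_cast h2
  have hEcard' : (#E : ℝ) ≤ ε / 4 * L ^ 2 := by
    have h1 : (#E : ℝ) * x ≤ ε / 4 * L ^ 2 * x := by
      refine (hEcard.trans hsum).trans (le_of_eq ?_)
      rw [hx]; ring
    exact le_of_mul_le_mul_right h1 hx0
  have hS2 : (#((W ×ˢ W).filter fun p => p.1 ∈ S p.2) : ℝ) ≤ L * (8 * x + 2) := by
    have h1 : #((W ×ˢ W).filter fun p => p.1 ∈ S p.2) ≤ ∑ u ∈ W, #(S u) := by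
      rw [card_filter, sum_product_right]
      refine sum_le_sum fun u _ => ?_
      rw [← card_filter]
      exact card_le_card fun v hv => (mem_filter.1 hv).2
    calc _ ≤ ∑ u ∈ W, (#(S u) : ℝ) := by exact_mod_cast h1
      _ ≤ _ := (sum_le_card_nsmul W _ _ fun u _ => hScard u).trans_eq (nsmul_eq_mul _ _)
  have h1 : (#(backPairs T W W) : ℝ) ≤ #E + #((W ×ˢ W).filter fun p => p.1 ∈ S p.2) := by
    exact_mod_cast hback.trans ((card_le_card hsub).trans (card_union_le _ _))
  rw [hx] at hS2
  nlinarith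

/-- The number of backward edges between `v` and `W`. -/
noncomputable def backDegree (T : ℕ → ℕ → Prop) (W : Finset ℕ) (v : ℕ) : ℕ :=
  #(W.filter fun y => (y < v ∧ T v y) ∨ (v < y ∧ T y v))

lemma IsLocallyOptimal.sq_backDegree_le {T : ℕ → ℕ → Prop} (hT : IsTournament T)
    (hO : IsLocallyOptimal T) {a b v : ℕ} (hv : v ∈ Ico a b) :
    backDegree T (Ico a b) v ^ 2 ≤
      8 * (#(cyclicPairs T (Ico a b) v) + #(backPairs T (Ico a b) (Ico a b))) := by
  have hv' := mem_Ico.1 hv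
  set I := (Ico (v + 1) b).filter fun y => T y v with hI
  set O := (Ico a v).filter fun y => T v y with hO'
  have h1 : backDegree T (Ico a b) v ≤ #O + #I := by
    refine le_trans (card_le_card ?_) (card_union_le _ _)
    intro y hy
    simp only [hI, hO', mem_union, mem_filter, mem_Ico] at hy ⊢
    rcases hy.2 with h | h
    · exact Or.inl ⟨⟨hy.1.1, h.1⟩, h.2⟩
    · exact Or.inr ⟨⟨h.1, hy.1.2⟩, h.2⟩
  have h2 := sq_card_le_two_mul_card_pairs (fun x y : ℕ => x ≤ y) le_total I
    ((Ico (v + 1) b).filter fun y => T v y) (by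
      intro x hx
      have hx' := mem_Ico.1 (mem_filter.1 hx).1
      have e : ∀ p : ℕ → Prop, ((Ico (v + 1) b).filter p).filter (fun y => y ≤ x) =
          (Ico (v + 1) (x + 1)).filter p := by
        intro p
        ext y
        simp only [mem_filter, mem_Ico]
        constructor
        · rintro ⟨⟨h3, h4⟩, h5⟩; exact ⟨by omega, h4⟩
        · rintro ⟨h3, h4⟩; exact ⟨⟨by omega, h4⟩, by omega⟩
      rw [hI]
      convert hO.card_in_le_card_out v (x + 1) using 2
      · convert e _
      · convert e _)
  have h3 := sq_card_le_two_mul_card_pairs (fun x y : ℕ => y ≤ x) (fun x y => le_total y x) O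
    ((Ico a v).filter fun y => T y v) (by
      intro x hx
      have hx' := mem_Ico.1 (mem_filter.1 hx).1
      have e : ∀ p : ℕ → Prop, ((Ico a v).filter p).filter (fun y => x ≤ y) =
          (Ico x v).filter p := by
        intro p
        ext y
        simp only [mem_filter, mem_Ico]
        constructor
        · rintro ⟨⟨h3, h4⟩, h5⟩; exact ⟨by omega, h4⟩
        · rintro ⟨h3, h4⟩; exact ⟨⟨by omega, h4⟩, by omega⟩
      rw [hO']
      convert hO.card_out_le_card_in x v using 2
      · convert e _
      · convert e _)
  have h4 : #((((Ico (v + 1) b).filter fun y => T v y) ×ˢ I).filter fun p => p.1 ≤ p.2) ≤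
      #(cyclicPairs T (Ico a b) v) + #(backPairs T (Ico a b) (Ico a b)) := by
    refine le_trans (card_le_card ?_) (card_union_le _ _)
    rintro ⟨o, i⟩ h
    simp only [hI, mem_filter, mem_product, mem_Ico, mem_union, cyclicPairs, mem_backPairs] at h ⊢
    obtain ⟨⟨⟨ho, hvo⟩, hi, hiv⟩, hoi⟩ := h
    have hne : o ≠ i := by
      rintro rfl
      exact hT.asymm hvo hiv
    by_cases hToi : T o i
    · exact Or.inl ⟨⟨by omega, by omega⟩, hvo, hToi, hiv⟩
    · exact Or.inr ⟨by omega, by omega, by omega, hT.of_not hne hToi⟩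
  have h5 : #((((Ico a v).filter fun y => T y v) ×ˢ O).filter fun p => p.2 ≤ p.1) ≤
      #(cyclicPairs T (Ico a b) v) + #(backPairs T (Ico a b) (Ico a b)) := by
    refine le_trans ?_ (card_union_le _ _)
    refine card_le_card_of_injOn Prod.swap ?_ Prod.swap_injective.injOn
    rintro ⟨i, o⟩ h
    simp only [hO', mem_filter, mem_product, mem_Ico, mem_union, cyclicPairs, mem_backPairs,
      mem_coe, Prod.swap_prod_mk] at h ⊢
    obtain ⟨⟨⟨hi, hiv⟩, ho, hvo⟩, hoi⟩ := h
    have hne : o ≠ i := by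
      rintro rfl
      exact hT.asymm hvo hiv
    by_cases hToi : T o i
    · exact Or.inl ⟨⟨by omega, by omega⟩, hvo, hToi, hiv⟩
    · exact Or.inr ⟨by omega, by omega, by omega, hT.of_not hne hToi⟩
  have h6 : #I ^ 2 ≤ 2 * (#(cyclicPairs T (Ico a b) v) + #(backPairs T (Ico a b) (Ico a b))) := by
    refine h2.trans (Nat.mul_le_mul_left _ (le_trans (le_of_eq ?_) h4))
    congr
  have h7 : #O ^ 2 ≤ 2 * (#(cyclicPairs T (Ico a b) v) + #(backPairs T (Ico a b) (Ico a b))) := by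
    refine h3.trans (Nat.mul_le_mul_left _ (le_trans (le_of_eq ?_) h5))
    congr
  have h8 : backDegree T (Ico a b) v ^ 2 ≤ (#O + #I) ^ 2 := Nat.pow_le_pow_left h1 2
  zify at *
  nlinarith [sq_nonneg ((#O : ℤ) - #I)]

/-- A locally optimal order without the unavoidable pattern has boundedly many vertices of
linear backward degree in each interval. -/
lemma exists_card_large_backDegree_le (t : ℕ) (η : ℝ) (hη : 0 < η) (hη1 : η ≤ 1) :
    ∃ Q : ℕ, ∀ T : ℕ → ℕ → Prop, IsTournament T → IsLocallyOptimal T → ¬ ContainsU T t →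
      ∀ a b, #((Ico a b).filter fun v => η * #(Ico a b) < backDegree T (Ico a b) v) ≤ Q := by
  obtain ⟨c₀, hc₀, L₀, hL₀⟩ := IsLocallyOptimal.card_backPairs_le_of_sum (η ^ 2 / 16)
    (by positivity)
  set c := min (η ^ 2 / 16) (c₀ / 2) with hc
  have hc0 : 0 < c := lt_min (by positivity) (by positivity)
  have hc1 : c ≤ 1 := (min_le_left _ _).trans (by nlinarith)
  obtain ⟨Q, hQ⟩ := exists_containsU_of_cyclicPairs t c hc0 hc1
  refine ⟨L₀ + Q + ⌈Q / (c₀ / 2)⌉₊, fun T hT hO hU a b => ?_⟩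
  by_contra! hcard
  apply hU
  set W := Ico a b with hW
  set F := W.filter fun v => η * #W < backDegree T W v with hF
  have hFW : #F ≤ #W := card_filter_le _ _
  have hW0 : (0 : ℝ) ≤ #W := by positivity
  rcases le_or_gt (#(backPairs T W W) : ℝ) (η ^ 2 / 16 * (#W : ℝ) ^ 2) with hb | hb
  · refine hQ hT W F (filter_subset _ _) (by omega) fun v hv => ?_
    obtain ⟨hvW, hvη⟩ := mem_filter.1 hv
    have h1 : (backDegree T W v : ℝ) ^ 2 ≤ 8 * (#(cyclicPairs T W v) + #(backPairs T W W)) := by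
      exact_mod_cast hO.sq_backDegree_le hT hvW
    have h2 : (η * #W) ^ 2 ≤ (backDegree T W v : ℝ) ^ 2 :=
      pow_le_pow_left₀ (by positivity) hvη.le 2
    have h3 : c * (#W : ℝ) ^ 2 ≤ η ^ 2 / 16 * (#W : ℝ) ^ 2 :=
      mul_le_mul_of_nonneg_right (min_le_left _ _) (by positivity)
    rw [mul_pow] at h2
    linarith
  · have h1 : c₀ * (#W : ℝ) ^ 3 < ∑ v ∈ W, (#(cyclicPairs T W v) : ℝ) := by
      by_contra! h
      exact absurd (hL₀ T hT hO a b (by rw [← hW]; omega) h) (not_le.2 hb)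
    set G := W.filter fun v => c₀ / 2 * (#W : ℝ) ^ 2 ≤ #(cyclicPairs T W v) with hG
    refine hQ hT W G (filter_subset _ _) ?_ fun v hv => ?_
    · have h2 : ∀ v ∈ W, (#(cyclicPairs T W v) : ℝ) ≤ c₀ / 2 * (#W : ℝ) ^ 2 +
          (#W : ℝ) ^ 2 * (if c₀ / 2 * (#W : ℝ) ^ 2 ≤ #(cyclicPairs T W v) then 1 else 0) := by
        intro v _
        have h3 : (#(cyclicPairs T W v) : ℝ) ≤ (#W : ℝ) ^ 2 := by
          have := card_filter_le (W ×ˢ W) fun p => T v p.1 ∧ T p.1 p.2 ∧ T p.2 v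
          rw [card_product, ← sq] at this
          exact_mod_cast this
        split_ifs with h
        · have : 0 ≤ c₀ / 2 * (#W : ℝ) ^ 2 := by positivity
          linarith
        · linarith
      have h3 := sum_le_sum h2
      rw [sum_add_distrib, sum_const, nsmul_eq_mul, ← mul_sum] at h3
      have h4 : (∑ v ∈ W, (if c₀ / 2 * (#W : ℝ) ^ 2 ≤ #(cyclicPairs T W v) then (1 : ℝ) else 0)) =
          #G := by
        rw [hG, card_filter]
        push_cast
        rfl
      rw [h4] at h3
      have h5 : (Q : ℝ) ≤ c₀ / 2 * #W := by
        rw [← div_le_iff₀' (by positivity)]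
        refine (Nat.le_ceil _).trans ?_
        exact_mod_cast (by omega : ⌈Q / (c₀ / 2)⌉₊ ≤ #W)
      have h6 : (0 : ℝ) < #W := by exact_mod_cast (by omega : 0 < #W)
      have h7 : (#W : ℝ) ^ 2 * (c₀ / 2 * #W) ≤ (#W : ℝ) ^ 2 * #G := by nlinarith
      exact_mod_cast h5.trans (le_of_mul_le_mul_left h7 (by positivity))
    · refine le_trans ?_ (mem_filter.1 hv).2
      exact mul_le_mul_of_nonneg_right (min_le_right _ _) (by positivity)

lemma IsTournament.containsU_of_gap {T : ℕ → ℕ → Prop} (hT : IsTournament T) {t a b c d : ℕ}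
    {A B : Finset ℕ} (hab : a ≤ b) (hcd : c ≤ d)
    (hA : A ⊆ Ico a b) (hB : B ⊆ Ico c d) (hAcard : #A = 2 ^ t) (hBcard : #B = 2 ^ t)
    (hBA : ∀ x ∈ A, ∀ y ∈ B, T y x) (hgap : 2 * 2 ^ t ≤ c - b)
    (hA' : ∀ v ∈ A, 4 * 2 ^ t * backDegree T (Ico a d) v ≤ c - b)
    (hB' : ∀ v ∈ B, 4 * 2 ^ t * backDegree T (Ico a d) v ≤ c - b) : ContainsU T t := by
  set Z := (Ico b c).filter fun z => (∀ x ∈ A, T x z) ∧ ∀ y ∈ B, T z y with hZ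
  set N : ℕ → Finset ℕ := fun v =>
    (Ico a d).filter fun y => (y < v ∧ T v y) ∨ (v < y ∧ T y v) with hN
  have hsub : Ico b c ⊆ Z ∪ (A ∪ B).biUnion N := by
    intro z hz
    by_cases hzZ : z ∈ Z
    · exact mem_union_left _ hzZ
    refine mem_union_right _ (mem_biUnion.2 ?_)
    have hz' := mem_Ico.1 hz
    have hzd : z ∈ Ico a d := mem_Ico.2 ⟨by omega, by omega⟩
    simp only [hZ, mem_filter, hz, true_and, not_and_or, not_forall] at hzZ
    rcases hzZ with ⟨x, hx, hxz⟩ | ⟨y, hy, hzy⟩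
    · have hx' := mem_Ico.1 (hA hx)
      exact ⟨x, mem_union_left _ hx, mem_filter.2 ⟨hzd, Or.inr
        ⟨by omega, hT.of_not (by omega) hxz⟩⟩⟩
    · have hy' := mem_Ico.1 (hB hy)
      exact ⟨y, mem_union_right _ hy, mem_filter.2 ⟨hzd, Or.inl
        ⟨by omega, hT.of_not (by omega) hzy⟩⟩⟩
  have h1 : c - b ≤ #Z + ∑ v ∈ A ∪ B, #(N v) := by
    rw [← Nat.card_Ico b c]
    exact (card_le_card hsub).trans ((card_union_le _ _).trans
      (Nat.add_le_add_left card_biUnion_le _))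
  have h2 : 4 * 2 ^ t * ∑ v ∈ A ∪ B, #(N v) ≤ 2 * 2 ^ t * (c - b) := by
    rw [mul_sum]
    refine (sum_le_card_nsmul _ _ (c - b) fun v hv => ?_).trans ?_
    · rcases mem_union.1 hv with hv | hv
      · exact hA' v hv
      · exact hB' v hv
    · rw [smul_eq_mul]
      refine Nat.mul_le_mul_right _ ((card_union_le _ _).trans ?_)
      omega
  have h3 : 2 * ∑ v ∈ A ∪ B, #(N v) ≤ c - b := by
    refine Nat.le_of_mul_le_mul_left (c := 2 * 2 ^ t) ?_ (by positivity)
    calc _ = 4 * 2 ^ t * ∑ v ∈ A ∪ B, #(N v) := by ring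
      _ ≤ _ := h2
  refine hT.containsU_of_finsets A Z B hAcard.ge (by omega) hBcard.ge ?_ ?_ ?_
  · exact fun x hx z hz => (mem_filter.1 hz).2.1 x hx
  · exact fun z hz y hy => (mem_filter.1 hz).2.2 y hy
  · exact fun y hy x hx => hBA x hx y hy

/-- The `p`-th interval of length `m`. -/
def block (m p : ℕ) : Finset ℕ := Ico (p * m) ((p + 1) * m)

lemma card_block (m p : ℕ) : #(block m p) = m := by
  simp [block, add_mul]

lemma lt_of_mem_block {m p q x y : ℕ} (h : p < q) (hx : x ∈ block m p) (hy : y ∈ block m q) : x < y :=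
  (mem_Ico.1 hx).2.trans_le ((Nat.mul_le_mul_right m h).trans (mem_Ico.1 hy).1)

/-- The vertices of large backward degree in the interval spanned by two blocks. -/
noncomputable def exceptional (T : ℕ → ℕ → Prop) (t m p q : ℕ) : Finset ℕ :=
  (Ico (p * m) ((q + 1) * m)).filter fun v =>
    (1 / (12 * 2 ^ t) : ℝ) * #(Ico (p * m) ((q + 1) * m)) <
      backDegree T (Ico (p * m) ((q + 1) * m)) v

lemma IsTournament.containsU_of_blocks {T : ℕ → ℕ → Prop} (hT : IsTournament T) {t m p q : ℕ}
    {A B : Finset ℕ} (hm : 2 ^ (t + 1) ≤ m) (hpq : p + 2 ≤ q)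
    (hA : A ⊆ block m p) (hB : B ⊆ block m q) (hAcard : #A = 2 ^ t) (hBcard : #B = 2 ^ t)
    (hBA : ∀ x ∈ A, ∀ y ∈ B, T y x) (hA' : Disjoint A (exceptional T t m p q))
    (hB' : Disjoint B (exceptional T t m p q)) : ContainsU T t := by
  obtain ⟨k, rfl⟩ := Nat.exists_eq_add_of_le hpq
  have hgap : (p + 2 + k) * m - (p + 1) * m = (k + 1) * m := by
    rw [← Nat.sub_mul]; congr 1; omega
  have key : ∀ v ∈ Ico (p * m) ((p + 2 + k + 1) * m), v ∉ exceptional T t m p (p + 2 + k) →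
      4 * 2 ^ t * backDegree T (Ico (p * m) ((p + 2 + k + 1) * m)) v ≤
        (p + 2 + k) * m - (p + 1) * m := by
    intro v hv hv'
    simp only [exceptional, mem_filter, hv, true_and, not_lt, Nat.card_Ico] at hv'
    rw [hgap]
    have h1 : (p + 2 + k + 1) * m - p * m = (k + 3) * m := by
      rw [← Nat.sub_mul]; congr 1; omega
    rw [h1, one_div, inv_mul_eq_div, le_div_iff₀ (by positivity)] at hv'
    have h2 : backDegree T (Ico (p * m) ((p + 2 + k + 1) * m)) v * (12 * 2 ^ t) ≤ (k + 3) * m := by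
      exact_mod_cast hv'
    nlinarith [Nat.zero_le (k * m)]
  refine hT.containsU_of_gap (a := p * m) (b := (p + 1) * m) (c := (p + 2 + k) * m)
    (d := (p + 2 + k + 1) * m) (Nat.mul_le_mul_right _ (by omega))
    (Nat.mul_le_mul_right _ (by omega)) hA hB hAcard hBcard hBA ?_ ?_ ?_
  · rw [hgap, ← pow_succ']
    exact hm.trans (Nat.le_mul_of_pos_left _ (by omega))
  · exact fun v hv => key v (Ico_subset_Ico_right (Nat.mul_le_mul_right _ (by omega)) (hA hv))
      (disjoint_left.1 hA' hv)
  · exact fun v hv => key v (Ico_subset_Ico_left (Nat.mul_le_mul_right _ (by omega)) (hB hv))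
      (disjoint_left.1 hB' hv)

/-- A greedy choice of pairwise disjoint objects. -/
lemma exists_disjoint_seq {α β : Type*} [Nonempty α] (P : α → Prop) (supp : α → Finset β)
    (k : ℕ) (hk : ∀ a, #(supp a) ≤ k) (D : Finset β) (N : ℕ)
    (h : ∀ B : Finset β, #B ≤ #D + N * k → ∃ a, P a ∧ Disjoint (supp a) B) :
    ∃ F : ℕ → α, ∀ i < N, P (F i) ∧ Disjoint (supp (F i)) D ∧
      ∀ j < i, Disjoint (supp (F i)) (supp (F j)) := by
  suffices ∀ n ≤ N, ∃ F : ℕ → α, ∀ i < n, P (F i) ∧ Disjoint (supp (F i)) D ∧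
      ∀ j < i, Disjoint (supp (F i)) (supp (F j)) from this N le_rfl
  intro n
  induction n with
  | zero =>
    exact fun _ => ⟨fun _ => Classical.arbitrary α, fun i hi => absurd hi (Nat.not_lt_zero i)⟩
  | succ n ih =>
    intro hn
    obtain ⟨F, hF⟩ := ih (by omega)
    obtain ⟨a, ha, hdisj⟩ := h (D ∪ (range n).biUnion fun j => supp (F j)) (by
      refine (card_union_le _ _).trans (Nat.add_le_add_left ?_ _)
      refine (card_biUnion_le_card_mul _ _ k fun j _ => hk _).trans ?_
      rw [card_range]
      exact Nat.mul_le_mul_right _ (by omega))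
    rw [disjoint_union_right, disjoint_biUnion_right] at hdisj
    refine ⟨fun i => if i = n then a else F i, fun i hi => ?_⟩
    rcases (Nat.lt_succ_iff.1 hi).eq_or_lt with rfl | hi
    · simp only [if_true]
      refine ⟨ha, hdisj.1, fun j hj => ?_⟩
      rw [if_neg hj.ne]
      exact hdisj.2 j (mem_range.2 hj)
    · simp only [if_neg hi.ne]
      refine ⟨(hF i hi).1, (hF i hi).2.1, fun j hj => ?_⟩
      rw [if_neg (by omega)]
      exact (hF i hi).2.2 j hj

lemma IsTournament.exists_biclique_avoiding {T : ℕ → ℕ → Prop} (hT : IsTournament T)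
    {s t m K : ℕ} (hs : 1 ≤ s) (hm : 1 ≤ m) (R : ℕ → ℕ → Prop) (X Y B : Finset ℕ)
    (hX : #X = m) (hY : #Y = m) (hB : #B ≤ K)
    (hR : (2 ^ (s + 1) * 2 ^ t + 2 * K) * (m : ℝ) ^ ((2 : ℝ) - 1 / s) ≤
      #((X ×ˢ Y).filter fun p => R p.1 p.2)) :
    ∃ f : Fin s ⊕ Fin t → ℕ, ((∀ i, f (.inl i) ∈ X) ∧ (∀ j, f (.inr j) ∈ Y) ∧
      IsTransSeq T (fun i => f (.inl i)) ∧ IsTransSeq T (fun j => f (.inr j)) ∧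
      ∀ i j, R (f (.inl i)) (f (.inr j))) ∧ Disjoint (univ.image f) B := by
  set r : ℝ := (m : ℝ) ^ ((2 : ℝ) - 1 / s) with hr
  have hm0 : (0 : ℝ) < m := by exact_mod_cast hm
  have hmr : (m : ℝ) ≤ r := by
    have h1 : (1 : ℝ) ≤ (2 : ℝ) - 1 / s := by
      have : (1 : ℝ) / s ≤ 1 := by
        rw [div_le_one (by positivity)]
        exact_mod_cast hs
      linarith
    calc (m : ℝ) = (m : ℝ) ^ (1 : ℝ) := (Real.rpow_one _).symm
      _ ≤ r := Real.rpow_le_rpow_of_exponent_le (by exact_mod_cast hm) h1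
  have h1 : (X ×ˢ Y).filter (fun p => R p.1 p.2) ⊆
      (((X \ B) ×ˢ (Y \ B)).filter fun p => R p.1 p.2) ∪ (B ×ˢ Y ∪ X ×ˢ B) := by
    rintro ⟨x, y⟩ hp
    simp only [mem_filter, mem_product, mem_union, mem_sdiff] at hp ⊢
    tauto
  have h2 : #((X ×ˢ Y).filter fun p => R p.1 p.2) ≤
      #(((X \ B) ×ˢ (Y \ B)).filter fun p => R p.1 p.2) + 2 * K * m := by
    refine (card_le_card h1).trans ((card_union_le _ _).trans (Nat.add_le_add_left ?_ _))
    refine (card_union_le _ _).trans ?_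
    rw [card_product, card_product, hX, hY]
    nlinarith
  have h3 : (#((X ×ˢ Y).filter fun p => R p.1 p.2) : ℝ) ≤
      #(((X \ B) ×ˢ (Y \ B)).filter fun p => R p.1 p.2) + 2 * K * m := by exact_mod_cast h2
  have h4 : (2 * K : ℝ) * m ≤ 2 * K * r := by gcongr
  obtain ⟨f, hfX, hf, hcard⟩ := hT.exists_transSeq_common s (2 ^ t) m hs Nat.one_le_two_pow hm
    (X \ B) (Y \ B) ((card_le_card sdiff_subset).trans hX.le)
    ((card_le_card sdiff_subset).trans hY.le) R (by push_cast; rw [← hr]; linarith)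
  obtain ⟨g, hgY, hg⟩ := hT.exists_isTransSeq t _ hcard
  simp only [mem_filter, mem_sdiff] at hfX hgY
  refine ⟨Sum.elim f g, ⟨fun i => (hfX i).1, fun j => (hgY j).1.1, hf, hg,
    fun i j => (hgY j).2 i⟩, ?_⟩
  rw [disjoint_left]
  intro x hx
  obtain ⟨e, -, rfl⟩ := mem_image.1 hx
  rcases e with i | j
  · exact (hfX i).2
  · exact (hgY j).1.2

lemma IsTransSeq.append {V : Type*} {T : V → V → Prop} {k l : ℕ} {f : Fin k → V} {g : Fin l → V}
    (hf : IsTransSeq T f) (hg : IsTransSeq T g) (hfg : ∀ i j, T (f i) (g j)) :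
    IsTransSeq T (Fin.append f g) := by
  intro i j hij
  induction i using Fin.addCases with
  | left i =>
    induction j using Fin.addCases with
    | left j => simpa using hf i j hij
    | right j => simpa using hfg i j
  | right i =>
    induction j using Fin.addCases with
    | left j =>
      have := Fin.lt_def.1 hij
      simp at this
      omega
    | right j => simpa using hg i j (Nat.lt_of_add_lt_add_left (Fin.lt_def.1 hij))

lemma card_exceptional_le (t : ℕ) :
    ∃ Q : ℕ, ∀ T : ℕ → ℕ → Prop, IsTournament T → IsLocallyOptimal T → ¬ ContainsU T t →
      ∀ m p q, #(exceptional T t m p q) ≤ Q := by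
  obtain ⟨Q, hQ⟩ := exists_card_large_backDegree_le t (1 / (12 * 2 ^ t)) (by positivity) (by
    rw [div_le_one (by positivity)]
    have : (1 : ℝ) ≤ 2 ^ t := one_le_pow₀ (by norm_num)
    linarith)
  exact ⟨Q, fun T hT hO hU m p q => hQ T hT hO hU _ _⟩

/-- Two dense pairs of blocks cannot cross. -/
lemma exists_not_crossing (s t : ℕ) (hs : 1 ≤ s) (hst : t ≤ 2 * s) :
    ∃ C : ℝ, 0 < C ∧ ∀ T : ℕ → ℕ → Prop, IsTournament T → IsLocallyOptimal T →
      ¬ ContainsU T t → ∀ m : ℕ, 2 ^ (t + 1) ≤ m →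
      ∀ p p' q q', p + 2 ≤ p' → p' + 2 ≤ q → q + 2 ≤ q' →
        C * (m : ℝ) ^ ((2 : ℝ) - 1 / s) ≤ #(backPairs T (block m p) (block m q)) →
        ¬ C * (m : ℝ) ^ ((2 : ℝ) - 1 / s) ≤ #(backPairs T (block m p') (block m q')) := by
  obtain ⟨N, hN⟩ := exists_monochromatic_product (κ := Option ((Fin s ⊕ Fin t) × (Fin s ⊕ Fin t)))
    (2 ^ t) Nat.one_le_two_pow
  obtain ⟨Q, hQ⟩ := card_exceptional_le t
  set K := 4 * Q + N * (s + t) with hK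
  refine ⟨2 ^ (s + 1) * 2 ^ t + 2 * (K : ℕ), by positivity,
    fun T hT hO hU m hm p p' q q' h₁ h₂ h₃ hpq hpq' => hU ?_⟩
  have hm1 : 1 ≤ m := Nat.one_le_two_pow.trans hm
  set D := (exceptional T t m p p' ∪ exceptional T t m p q') ∪
    (exceptional T t m p' q ∪ exceptional T t m q q') with hD
  have hDcard : #D ≤ 4 * Q := by
    refine (card_union_le _ _).trans ?_
    have e1 := card_union_le (exceptional T t m p p') (exceptional T t m p q')
    have e2 := card_union_le (exceptional T t m p' q) (exceptional T t m q q')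
    have := hQ T hT hO hU m
    have f1 := this p p'
    have f2 := this p q'
    have f3 := this p' q
    have f4 := this q q'
    omega
  have hsupp : ∀ f : Fin s ⊕ Fin t → ℕ, #(univ.image f) ≤ s + t := fun f =>
    card_image_le.trans (by simp)
  obtain ⟨A, hA⟩ := exists_disjoint_seq _ (fun f : Fin s ⊕ Fin t → ℕ => univ.image f) (s + t)
    hsupp D N fun B hB => hT.exists_biclique_avoiding hs hm1 (fun x y => x < y ∧ T y x)
      (block m p) (block m q) B (K := K) (card_block _ _) (card_block _ _) (by omega)
      (hpq.trans (Nat.cast_le.2 (card_le_card fun z hz => by simpa [backPairs] using hz)))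
  obtain ⟨B, hB⟩ := exists_disjoint_seq _ (fun f : Fin s ⊕ Fin t → ℕ => univ.image f) (s + t)
    hsupp D N fun B hB => hT.exists_biclique_avoiding hs hm1 (fun x y => y < x ∧ T x y)
      (block m q') (block m p') B (K := K) (card_block _ _) (card_block _ _) (by omega) (by
        refine hpq'.trans (Nat.cast_le.2
          (card_le_card_of_injOn Prod.swap ?_ Prod.swap_injective.injOn))
        rintro ⟨x, y⟩ h
        simp only [mem_coe, mem_backPairs, mem_filter, mem_product, Prod.swap_prod_mk] at h ⊢
        tauto)
  set bA : Fin s ⊕ Fin t → ℕ := Sum.elim (fun _ => p) (fun _ => q) with hbA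
  set bB : Fin s ⊕ Fin t → ℕ := Sum.elim (fun _ => q') (fun _ => p') with hbB
  have hAmem : ∀ i < N, ∀ e, A i e ∈ block m (bA e) := by
    rintro i hi (e | e)
    · exact (hA i hi).1.1 e
    · exact (hA i hi).1.2.1 e
  have hBmem : ∀ i < N, ∀ e, B i e ∈ block m (bB e) := by
    rintro i hi (e | e)
    · exact (hB i hi).1.1 e
    · exact (hB i hi).1.2.1 e
  have hinj : ∀ F : ℕ → Fin s ⊕ Fin t → ℕ,
      (∀ i < N, ∀ j < i, Disjoint (univ.image (F i)) (univ.image (F j))) →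
      ∀ S ⊆ range N, ∀ e, #(S.image fun i => F i e) = #S := by
    intro F hF S hS e
    refine card_image_of_injOn fun i hi j hj hij => ?_
    have h1 : ∀ i j, F i e = F j e → i < N → ¬ j < i := fun i j hij hi hji =>
      disjoint_left.1 (hF i hi j hji) (mem_image_of_mem _ (mem_univ e))
        (hij ▸ mem_image_of_mem _ (mem_univ e))
    have h2 := h1 i j hij (mem_range.1 (hS hi))
    have h3 := h1 j i hij.symm (mem_range.1 (hS hj))
    omega
  set bad : ℕ → ℕ → (Fin s ⊕ Fin t) × (Fin s ⊕ Fin t) → Prop := fun i j z =>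
    (bA z.1 < bB z.2 ∧ T (B j z.2) (A i z.1)) ∨ (bB z.2 < bA z.1 ∧ T (A i z.1) (B j z.2)) with hbad
  obtain ⟨a, S, hS, S', hS', hSM, hSM', hφ⟩ := hN fun i j =>
    if h : ∃ z, bad i j z then some h.choose else none
  rcases a with - | ⟨x, y⟩
  · obtain ⟨i, hi⟩ := card_pos.1 (hSM.symm ▸ Nat.two_pow_pos t)
    obtain ⟨j, hj⟩ := card_pos.1 (hSM'.symm ▸ Nat.two_pow_pos t)
    have hij : ¬ ∃ z, bad i j z := by
      intro h
      have := hφ i hi j hj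
      rw [dif_pos h] at this
      exact absurd this (by simp)
    have hi := mem_range.1 (hS hi)
    have hj := mem_range.1 (hS' hj)
    have hfwd : ∀ x y, bA x < bB y → T (A i x) (B j y) := fun x y hxy =>
      hT.of_not (lt_of_mem_block hxy (hAmem i hi x) (hBmem j hj y)).ne'
        fun h => hij ⟨(x, y), Or.inl ⟨hxy, h⟩⟩
    have hfwd' : ∀ x y, bB y < bA x → T (B j y) (A i x) := fun x y hxy =>
      hT.of_not (lt_of_mem_block hxy (hBmem j hj y) (hAmem i hi x)).ne'
        fun h => hij ⟨(x, y), Or.inr ⟨hxy, h⟩⟩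
    obtain ⟨-, -, ha1, hv3, ha⟩ := (hA i hi).1
    obtain ⟨-, -, hb1, hv2, hb⟩ := (hB j hj).1
    have happ := ha1.append hb1 fun k l => hfwd _ _ (by simp only [hbA, hbB, Sum.elim_inl]; omega)
    refine hT.containsU_of_seqs (fun k => Fin.append (fun k => A i (.inl k)) (fun k => B j (.inl k))
      (Fin.castLE (by omega : t ≤ s + s) k)) (fun k => B j (.inr k)) (fun k => A i (.inr k))
      (fun k l hkl => happ _ _ hkl) hv2 hv3 ?_ ?_ ?_
    · intro k l
      generalize Fin.castLE (by omega : t ≤ s + s) k = k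
      induction k using Fin.addCases with
      | left k =>
        rw [Fin.append_left]
        exact hfwd _ _ (by simp only [hbA, hbB, Sum.elim_inl, Sum.elim_inr]; omega)
      | right k =>
        rw [Fin.append_right]
        exact (hb k l).2
    · exact fun k l => hfwd' _ _ (by simp only [hbA, hbB, Sum.elim_inr]; omega)
    · intro l k
      generalize Fin.castLE (by omega : t ≤ s + s) k = k
      induction k using Fin.addCases with
      | left k =>
        rw [Fin.append_left]
        exact (ha k l).2
      | right k =>
        rw [Fin.append_right]
        exact hfwd _ _ (by simp only [hbA, hbB, Sum.elim_inl, Sum.elim_inr]; omega)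
  · have hall : ∀ i ∈ S, ∀ j ∈ S', bad i j (x, y) := by
      intro i hi j hj
      have := hφ i hi j hj
      split_ifs at this with h
      rw [← Option.some.inj this]
      exact h.choose_spec
    have hAD : ∀ E ⊆ D, Disjoint (S.image fun i => A i x) E := by
      intro E hE
      rw [disjoint_left]
      intro v hv hvE
      obtain ⟨i, hi, rfl⟩ := mem_image.1 hv
      exact disjoint_left.1 (hA i (mem_range.1 (hS hi))).2.1 (mem_image_of_mem _ (mem_univ x))
        (hE hvE)
    have hBD : ∀ E ⊆ D, Disjoint (S'.image fun i => B i y) E := by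
      intro E hE
      rw [disjoint_left]
      intro v hv hvE
      obtain ⟨i, hi, rfl⟩ := mem_image.1 hv
      exact disjoint_left.1 (hB i (mem_range.1 (hS' hi))).2.1 (mem_image_of_mem _ (mem_univ y))
        (hE hvE)
    have hAsub : (S.image fun i => A i x) ⊆ block m (bA x) := by
      intro v hv
      obtain ⟨i, hi, rfl⟩ := mem_image.1 hv
      exact hAmem i (mem_range.1 (hS hi)) x
    have hBsub : (S'.image fun i => B i y) ⊆ block m (bB y) := by
      intro v hv
      obtain ⟨i, hi, rfl⟩ := mem_image.1 hv
      exact hBmem i (mem_range.1 (hS' hi)) y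
    have hAcard := (hinj A (fun i hi => (hA i hi).2.2) S hS x).trans hSM
    have hBcard := (hinj B (fun i hi => (hB i hi).2.2) S' hS' y).trans hSM'
    have hlt : bA x + 2 ≤ bB y → exceptional T t m (bA x) (bB y) ⊆ D → ContainsU T t := by
      intro hxy hE
      refine hT.containsU_of_blocks hm hxy hAsub hBsub hAcard hBcard ?_ (hAD _ hE) (hBD _ hE)
      simp only [forall_mem_image]
      intro i hi j hj
      rcases hall i hi j hj with h | h
      · exact h.2
      · have := h.1
        simp only at this
        omega
    have hgt : bB y + 2 ≤ bA x → exceptional T t m (bB y) (bA x) ⊆ D → ContainsU T t := by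
      intro hxy hE
      refine hT.containsU_of_blocks hm hxy hBsub hAsub hBcard hAcard ?_ (hBD _ hE) (hAD _ hE)
      simp only [forall_mem_image]
      intro j hj i hi
      rcases hall i hi j hj with h | h
      · have := h.1
        simp only at this
        omega
      · exact h.2
    rcases x with x | x <;> rcases y with y | y <;>
      simp only [hbA, hbB, Sum.elim_inl, Sum.elim_inr] at hlt hgt
    · exact hlt (by omega) (subset_union_right.trans subset_union_left)
    · exact hlt (by omega) (subset_union_left.trans subset_union_left)
    · exact hlt (by omega) (subset_union_right.trans subset_union_right)
    · exact hgt (by omega) (subset_union_left.trans subset_union_right)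

lemma card_le_of_not_crossing {k : ℕ} (H : Finset (ℕ × ℕ)) (X Y : Finset ℕ) (hX : #X ≤ k)
    (hY : #Y ≤ k) (hH : H ⊆ X ×ˢ Y) (hle : ∀ z ∈ H, z.1 ≤ z.2)
    (hcross : ∀ p p' q q', p + 2 ≤ p' → p' + 2 ≤ q → q + 2 ≤ q' → (p, q) ∈ H → (p', q') ∉ H) :
    #H ≤ 6 * k := by
  set H₁ := H.filter fun z => ∀ q, z.2 + 2 ≤ q → (z.1, q) ∉ H with hH₁
  set H₂ := H.filter fun z => ∀ p, p + 2 ≤ z.1 → (p, z.2) ∉ H with hH₂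
  set H₃ := H.filter fun z => z.2 ≤ z.1 + 1 with hH₃
  have hsub : H ⊆ (H₁ ∪ H₂) ∪ H₃ := by
    rintro ⟨p, q⟩ hz
    by_contra hcon
    simp only [hH₁, hH₂, hH₃, mem_union, mem_filter, hz, true_and, not_or, not_forall,
      not_not] at hcon
    obtain ⟨⟨⟨q', hq', hpq'⟩, ⟨p', hp', hpq⟩⟩, hpq₀⟩ := hcon
    exact hcross p' p q q' hp' (by omega) hq' hpq hpq'
  have h₁ : #H₁ ≤ #(X ×ˢ range 2) := by
    refine card_le_card_of_injOn (fun z => (z.1, z.2 % 2)) ?_ ?_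
    · intro z hz
      simp only [coe_product, Set.mem_prod, mem_coe, mem_range]
      exact ⟨(mem_product.1 (hH (mem_filter.1 hz).1)).1, Nat.mod_lt _ two_pos⟩
    · rintro ⟨p, q⟩ hz ⟨p', q'⟩ hz' h
      simp only [Prod.mk.injEq] at h
      obtain ⟨rfl, h⟩ := h
      have hz := mem_filter.1 hz
      have hz' := mem_filter.1 hz'
      have e1 : ¬ q + 2 ≤ q' := fun e => hz.2 q' e hz'.1
      have e2 : ¬ q' + 2 ≤ q := fun e => hz'.2 q e hz.1
      simp only [Prod.mk.injEq, true_and]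
      omega
  have h₂ : #H₂ ≤ #(Y ×ˢ range 2) := by
    refine card_le_card_of_injOn (fun z => (z.2, z.1 % 2)) ?_ ?_
    · intro z hz
      simp only [coe_product, Set.mem_prod, mem_coe, mem_range]
      exact ⟨(mem_product.1 (hH (mem_filter.1 hz).1)).2, Nat.mod_lt _ two_pos⟩
    · rintro ⟨p, q⟩ hz ⟨p', q'⟩ hz' h
      simp only [Prod.mk.injEq] at h
      obtain ⟨rfl, h⟩ := h
      have hz := mem_filter.1 hz
      have hz' := mem_filter.1 hz'
      have e1 : ¬ p + 2 ≤ p' := fun e => hz'.2 p e hz.1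
      have e2 : ¬ p' + 2 ≤ p := fun e => hz.2 p' e hz'.1
      simp only [Prod.mk.injEq, and_true]
      omega
  have h₃ : #H₃ ≤ #(X ×ˢ range 2) := by
    refine card_le_card_of_injOn (fun z => (z.1, z.2 - z.1)) ?_ ?_
    · intro z hz
      have hz := mem_filter.1 hz
      simp only [coe_product, Set.mem_prod, mem_coe, mem_range]
      exact ⟨(mem_product.1 (hH hz.1)).1, by omega⟩
    · rintro ⟨p, q⟩ hz ⟨p', q'⟩ hz' h
      simp only [Prod.mk.injEq] at h
      obtain ⟨rfl, h⟩ := h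
      have e1 := hle _ (mem_filter.1 hz).1
      have e2 := hle _ (mem_filter.1 hz').1
      simp only at e1 e2
      simp only [Prod.mk.injEq, true_and]
      omega
  rw [card_product, card_range] at h₁ h₂ h₃
  have h₄ := card_le_card hsub
  have h₅ := card_union_le (H₁ ∪ H₂) H₃
  have h₆ := card_union_le H₁ H₂
  omega

lemma mem_block_div {m k x v : ℕ} (hm : 0 < m) (hv : v ∈ block (m * k) x) :
    v / m ∈ block k x ∧ v ∈ block m (v / m) := by
  simp only [block, mem_Ico] at hv ⊢
  refine ⟨⟨?_, ?_⟩, Nat.div_mul_le_self _ _, (Nat.lt_mul_div_succ v hm).trans_eq (mul_comm _ _)⟩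
  · rw [Nat.le_div_iff_mul_le hm]
    calc _ = x * (m * k) := by ring
      _ ≤ v := hv.1
  · rw [Nat.div_lt_iff_lt_mul hm]
    calc _ < (x + 1) * (m * k) := hv.2
      _ = _ := by ring

lemma card_backPairs_block_mul_le (T : ℕ → ℕ → Prop) {m k : ℕ} (hm : 0 < m) (x y : ℕ) :
    #(backPairs T (block (m * k) x) (block (m * k) y)) ≤
      ∑ z ∈ block k x ×ˢ block k y, #(backPairs T (block m z.1) (block m z.2)) := by
  refine le_trans (card_le_card ?_) card_biUnion_le
  rintro ⟨v, w⟩ hz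
  obtain ⟨hv, hw, hvw⟩ := mem_backPairs.1 hz
  obtain ⟨hv₁, hv₂⟩ := mem_block_div hm hv
  obtain ⟨hw₁, hw₂⟩ := mem_block_div hm hw
  exact mem_biUnion.2 ⟨(v / m, w / m), mem_product.2 ⟨hv₁, hw₁⟩, mem_backPairs.2 ⟨hv₂, hw₂, hvw⟩⟩

lemma card_backPairs_le_mul (T : ℕ → ℕ → Prop) (X Y : Finset ℕ) :
    #(backPairs T X Y) ≤ #X * #Y :=
  (card_filter_le _ _).trans (card_product _ _).le

lemma exists_card_backPairs_block_le (s t : ℕ) (hs : 2 ≤ s) (hst : t ≤ 2 * s) :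
    ∃ K : ℝ, 0 < K ∧ ∀ T : ℕ → ℕ → Prop, IsTournament T → IsLocallyOptimal T →
      ¬ ContainsU T t → ∀ h x y, #(backPairs T (block (144 ^ h) x) (block (144 ^ h) y)) ≤
        K * ((144 ^ h : ℕ) : ℝ) ^ ((2 : ℝ) - 1 / s) := by
  obtain ⟨C, hC, hcross⟩ := exists_not_crossing s t (by omega) hst
  set β : ℝ := (2 : ℝ) - 1 / s with hβ
  have hβ' : (3 : ℝ) / 2 ≤ β := by
    have : (1 : ℝ) / s ≤ 1 / 2 := one_div_le_one_div_of_le two_pos (by exact_mod_cast hs)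
    linarith
  set K : ℝ := 144 ^ 2 * C + (2 ^ (t + 1) * 144) ^ 2 with hK
  have hK0 : 0 < K := by positivity
  have hKC : 144 ^ 2 * C ≤ K := le_add_of_nonneg_right (by positivity)
  have hKm : (2 ^ (t + 1) * 144) ^ 2 ≤ K := le_add_of_nonneg_left (by positivity)
  have h144 : (12 : ℝ) * 144 ≤ (144 : ℝ) ^ β := by
    calc (12 : ℝ) * 144 = (144 : ℝ) ^ ((3 : ℝ) / 2) := by
          rw [show (144 : ℝ) = (12 : ℝ) ^ (2 : ℝ) by norm_num, ← Real.rpow_mul (by norm_num)]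
          norm_num
      _ ≤ _ := Real.rpow_le_rpow_of_exponent_le (by norm_num) hβ'
  refine ⟨K, hK0, fun T hT hO hU h => ?_⟩
  have hone : ∀ n : ℕ, 1 ≤ n → (1 : ℝ) ≤ (n : ℝ) ^ β := fun n hn =>
    Real.one_le_rpow (by exact_mod_cast hn) (by linarith)
  have hsmall : ∀ n : ℕ, 1 ≤ n → n ≤ 2 ^ (t + 1) * 144 → ∀ x y,
      (#(backPairs T (block n x) (block n y)) : ℝ) ≤ K * (n : ℝ) ^ β := by
    intro n hn hn' x y
    have h1 := card_backPairs_le_mul T (block n x) (block n y)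
    rw [card_block, card_block] at h1
    have h2 : (#(backPairs T (block n x) (block n y)) : ℝ) ≤ (2 ^ (t + 1) * 144) ^ 2 := by
      have := h1.trans (Nat.mul_le_mul hn' hn')
      rw [← sq] at this
      exact_mod_cast this
    calc _ ≤ K * 1 := by rw [mul_one]; exact h2.trans hKm
      _ ≤ _ := mul_le_mul_of_nonneg_left (hone n hn) hK0.le
  induction h with
  | zero =>
    exact hsmall _ (by norm_num) (by rw [pow_zero]; exact Nat.one_le_iff_ne_zero.2 (by positivity))
  | succ h ih =>
    intro x y
    set m := 144 ^ h with hm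
    have hm0 : 0 < m := by positivity
    rw [pow_succ, ← hm]
    rcases lt_or_ge m (2 ^ (t + 1)) with hmt | hmt
    · exact hsmall _ (by omega) (Nat.mul_le_mul_right _ hmt.le) x y
    set r : ℝ := (m : ℝ) ^ β with hr
    have hr0 : 0 < r := by positivity
    set H := (block 144 x ×ˢ block 144 y).filter fun z =>
      C * r ≤ #(backPairs T (block m z.1) (block m z.2)) with hH
    have hHcard : #H ≤ 6 * 144 := by
      refine card_le_of_not_crossing H (block 144 x) (block 144 y) (card_block _ _).le
        (card_block _ _).le (filter_subset _ _) ?_ ?_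
      · intro z hz
        by_contra! hlt
        have h1 := lt_of_lt_of_le (by positivity) (mem_filter.1 hz).2
        obtain ⟨w, hw⟩ := card_pos.1 (Nat.cast_pos.1 h1)
        obtain ⟨hw1, hw2, hw3, -⟩ := mem_backPairs.1 hw
        have := lt_of_mem_block hlt hw2 hw1
        omega
      · intro p p' q q' h1 h2 h3 hpq hpq'
        exact hcross T hT hO hU m hmt p p' q q' h1 h2 h3 (mem_filter.1 hpq).2 (mem_filter.1 hpq').2
    have hterm : ∀ z ∈ block 144 x ×ˢ block 144 y,
        (#(backPairs T (block m z.1) (block m z.2)) : ℝ) ≤ C * r + if z ∈ H then K * r else 0 := by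
      intro z hz
      split_ifs with hzH
      · have : 0 ≤ C * r := by positivity
        linarith [ih z.1 z.2]
      · have : ¬ C * r ≤ #(backPairs T (block m z.1) (block m z.2)) := fun h =>
          hzH (mem_filter.2 ⟨hz, h⟩)
        linarith
    have h1 : (#(backPairs T (block (m * 144) x) (block (m * 144) y)) : ℝ) ≤
        ∑ z ∈ block 144 x ×ˢ block 144 y, (#(backPairs T (block m z.1) (block m z.2)) : ℝ) := by
      exact_mod_cast card_backPairs_block_mul_le T hm0 x y
    have h2 := h1.trans (sum_le_sum hterm)
    rw [sum_add_distrib, sum_const, nsmul_eq_mul, card_product, card_block, card_block,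
      ← sum_filter, sum_const, nsmul_eq_mul] at h2
    have h3 : (#((block 144 x ×ˢ block 144 y).filter fun z => z ∈ H) : ℝ) ≤ 6 * 144 := by
      have : #((block 144 x ×ˢ block 144 y).filter fun z => z ∈ H) ≤ #H :=
        card_le_card fun z hz => (mem_filter.1 hz).2
      exact_mod_cast this.trans hHcard
    have h4 : (((m * 144 : ℕ) : ℝ)) ^ β = r * 144 ^ β := by
      push_cast
      rw [Real.mul_rpow (by positivity) (by norm_num)]
    rw [h4]
    have h5 : (#((block 144 x ×ˢ block 144 y).filter fun z => z ∈ H) : ℝ) * (K * r) ≤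
        6 * 144 * (K * r) := mul_le_mul_of_nonneg_right h3 (by positivity)
    have h6 : K * r * (12 * 144) ≤ K * r * 144 ^ β :=
      mul_le_mul_of_nonneg_left h144 (by positivity)
    have h7 : 144 ^ 2 * C * r ≤ K * r := mul_le_mul_of_nonneg_right hKC hr0.le
    have h8 : 0 ≤ K * r := by positivity
    push_cast at h2
    rw [← mul_assoc]
    linarith

/-- The extension of a tournament on `Fin n` to `ℕ` by forward edges. -/
def natExtension {n : ℕ} (T : Fin n → Fin n → Prop) (i j : ℕ) : Prop :=
  if h : i < n ∧ j < n then T ⟨i, h.1⟩ ⟨j, h.2⟩ else i < j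

lemma natExtension_val {n : ℕ} (T : Fin n → Fin n → Prop) (i j : Fin n) :
    natExtension T i j ↔ T i j := by
  simp [natExtension]

lemma natExtension_of_not {n : ℕ} (T : Fin n → Fin n → Prop) {i j : ℕ} (h : ¬ (i < n ∧ j < n)) :
    natExtension T i j ↔ i < j := by
  simp only [natExtension, dif_neg h]

lemma IsTournament.natExtension {n : ℕ} {T : Fin n → Fin n → Prop} (hT : IsTournament T) :
    IsTournament (natExtension T) := by
  refine ⟨fun x => ?_, fun x y hxy => ?_⟩
  · by_cases h : x < n
    · exact (natExtension_val T ⟨x, h⟩ ⟨x, h⟩).not.2 (hT.1 _)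
    · exact (natExtension_of_not T (by omega)).not.2 (lt_irrefl _)
  · by_cases h : x < n ∧ y < n
    · rw [natExtension_val T ⟨x, h.1⟩ ⟨y, h.2⟩, natExtension_val T ⟨y, h.2⟩ ⟨x, h.1⟩]
      exact hT.2 _ _ (by simpa using hxy)
    · rw [natExtension_of_not T h, natExtension_of_not T (by omega)]
      omega

lemma ContainsU.of_natExtension {n t : ℕ} {T : Fin n → Fin n → Prop}
    (h : ContainsU (natExtension T) t) : ContainsU T t := by
  obtain ⟨f, hf, hfT⟩ := h
  have hlt : ∀ p, f p < n := by
    intro p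
    obtain ⟨q, -, hq⟩ := exists_max_image univ f ⟨p, mem_univ p⟩
    refine (hq p (mem_univ p)).trans_lt ?_
    by_contra hn
    have h1 := hfT q (q.1 + 1, q.2) (Or.inr rfl)
    rw [natExtension_of_not T (by omega)] at h1
    exact absurd (hq _ (mem_univ _)) (not_le.2 h1)
  refine ⟨fun p => ⟨f p, hlt p⟩, fun p q hpq => hf (by simpa using hpq), fun p q hpq => ?_⟩
  exact (natExtension_val T ⟨f p, hlt p⟩ ⟨f q, hlt q⟩).1 (hfT p q hpq)

lemma ContainsU.of_equiv {V W : Type*} {T : V → V → Prop} {t : ℕ} (σ : W ≃ V)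
    (h : ContainsU (fun i j => T (σ i) (σ j)) t) : ContainsU T t := by
  obtain ⟨f, hf, hfT⟩ := h
  exact ⟨fun p => σ (f p), σ.injective.comp hf, hfT⟩

lemma backCount_sort {n : ℕ} (T : Fin n → Fin n → Prop) (h : Fin n → ℕ)
    (hh : Function.Injective h) :
    backCount T (Tuple.sort h) =
      #((univ : Finset (Fin n × Fin n)).filter fun p => h p.1 < h p.2 ∧ T p.2 p.1) := by
  set τ := Tuple.sort h with hτ
  have hmono : StrictMono (h ∘ τ) :=
    (Tuple.monotone_sort h).strictMono_of_injective (hh.comp τ.injective)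
  rw [backCount, Set.ncard_eq_toFinset_card']
  refine card_bij (fun p _ => (τ p.1, τ p.2)) ?_ ?_ ?_
  · intro p hp
    simp only [Set.mem_toFinset, Set.mem_ofPred_eq] at hp
    exact mem_filter.2 ⟨mem_univ _, hmono hp.1, hp.2⟩
  · rintro ⟨p, q⟩ _ ⟨p', q'⟩ _ hpq
    simpa using hpq
  · rintro ⟨p, q⟩ hpq
    have hpq := (mem_filter.1 hpq).2
    refine ⟨(τ.symm p, τ.symm q), ?_, by simp⟩
    simp only [Set.mem_toFinset, Set.mem_ofPred_eq, Equiv.apply_symm_apply]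
    refine ⟨hmono.lt_iff_lt.1 ?_, hpq.2⟩
    simpa using hpq.1

lemma backCount_refl {n : ℕ} (T : Fin n → Fin n → Prop) :
    backCount T (Equiv.refl _) =
      #((univ : Finset (Fin n × Fin n)).filter fun p => p.1 < p.2 ∧ T p.2 p.1) := by
  rw [backCount, Set.ncard_eq_toFinset_card']
  congr 1
  ext p
  rw [Set.mem_toFinset, mem_filter]
  exact (and_iff_right (mem_univ p)).symm

lemma isLocallyOptimal_natExtension {n : ℕ} {T : Fin n → Fin n → Prop}
    (hmin : ∀ τ : Equiv.Perm (Fin n), backCount T (Equiv.refl _) ≤ backCount T τ) :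
    IsLocallyOptimal (natExtension T) := by
  intro a b g hg
  set M := (Ico a b).sup g with hM
  have hgM : ∀ i ∈ Ico a b, g i ≤ M := fun i hi => le_sup (f := g) hi
  set h : Fin n → ℕ := fun i =>
    if (i : ℕ) < a then i else if (i : ℕ) < b then a + g i else a + M + 1 + i with hh
  have hout : ∀ i j : Fin n, ¬ ((i : ℕ) ∈ Ico a b ∧ (j : ℕ) ∈ Ico a b) → (i < j ↔ h i < h j) := by
    intro i j hij
    have hi := hgM i
    have hj := hgM j
    simp only [mem_Ico] at hij hi hj
    simp only [hh, Fin.lt_def]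
    split_ifs <;> omega
  have hinj : Function.Injective h := by
    intro i j hij
    by_cases hw : (i : ℕ) ∈ Ico a b ∧ (j : ℕ) ∈ Ico a b
    · refine Fin.ext (hg (mem_coe.2 hw.1) (mem_coe.2 hw.2) ?_)
      simp only [mem_Ico] at hw
      simp only [hh, if_neg (not_lt.2 hw.1.1), if_neg (not_lt.2 hw.2.1), if_pos hw.1.2,
        if_pos hw.2.2] at hij
      omega
    · have h1 := hout i j hw
      have h2 := hout j i (by tauto)
      rw [hij] at h1 h2
      simp only [lt_irrefl, iff_false, not_lt] at h1 h2
      exact le_antisymm h2 h1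
  have hle := hmin (Tuple.sort h)
  rw [backCount_sort T h hinj, backCount_refl] at hle
  set A := (univ : Finset (Fin n × Fin n)).filter fun p => p.1 < p.2 ∧ T p.2 p.1 with hA
  set B := (univ : Finset (Fin n × Fin n)).filter fun p => h p.1 < h p.2 ∧ T p.2 p.1 with hB
  set w : Fin n × Fin n → Prop := fun p => (p.1 : ℕ) ∈ Ico a b ∧ (p.2 : ℕ) ∈ Ico a b with hw
  have h1 : A.filter (fun p => ¬ w p) = B.filter fun p => ¬ w p := by
    ext p
    simp only [hA, hB, mem_filter, mem_univ, true_and]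
    constructor
    · rintro ⟨⟨h1, h2⟩, h3⟩
      exact ⟨⟨(hout _ _ h3).1 h1, h2⟩, h3⟩
    · rintro ⟨⟨h1, h2⟩, h3⟩
      exact ⟨⟨(hout _ _ h3).2 h1, h2⟩, h3⟩
  have h2 := card_filter_add_card_filter_not (s := A) w
  have h3 := card_filter_add_card_filter_not (s := B) w
  rw [h1] at h2
  have h4 : #(A.filter w) ≤ #(B.filter w) := by omega
  have h5 : #(backPairs (natExtension T) (Ico a b) (Ico a b)) ≤ #(A.filter w) := by
    refine card_le_card_of_surjOn (fun p => ((p.1 : ℕ), (p.2 : ℕ))) ?_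
    rintro ⟨i, j⟩ hij
    obtain ⟨hi, hj, hij, hT⟩ := mem_backPairs.1 (mem_coe.1 hij)
    simp only at hi hj hij hT
    by_cases hn : j < n ∧ i < n
    · have hT' := (natExtension_val T ⟨j, hn.1⟩ ⟨i, hn.2⟩).1 hT
      exact ⟨(⟨i, hn.2⟩, ⟨j, hn.1⟩), mem_coe.2 (mem_filter.2 ⟨mem_filter.2
        ⟨mem_univ _, hij, hT'⟩, hi, hj⟩), rfl⟩
    · rw [natExtension_of_not T hn] at hT
      omega
  refine h5.trans (h4.trans ?_)
  refine card_le_card_of_injOn (fun p => ((p.1 : ℕ), (p.2 : ℕ))) ?_ ?_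
  · rintro ⟨i, j⟩ hij
    obtain ⟨hij, hi, hj⟩ := mem_filter.1 (mem_coe.1 hij)
    obtain ⟨-, hlt, hT⟩ := mem_filter.1 hij
    simp only at hi hj hlt hT
    simp only [coe_filter, Set.mem_ofPred_eq, mem_product]
    refine ⟨⟨hi, hj⟩, ?_, (natExtension_val T j i).2 hT⟩
    simp only [mem_Ico] at hi hj
    simp only [hh, if_neg (not_lt.2 hi.1), if_neg (not_lt.2 hj.1), if_pos hi.2,
      if_pos hj.2] at hlt
    omega
  · rintro ⟨i, j⟩ _ ⟨i', j'⟩ _ hij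
    simpa [Fin.ext_iff] using hij

lemma backCount_refl_le {n : ℕ} (T : Fin n → Fin n → Prop) {m : ℕ} (hm : n ≤ m) :
    backCount T (Equiv.refl _) ≤ #(backPairs (natExtension T) (block m 0) (block m 0)) := by
  rw [backCount_refl]
  refine card_le_card_of_injOn (fun p => ((p.1 : ℕ), (p.2 : ℕ))) ?_ ?_
  · rintro ⟨i, j⟩ hij
    obtain ⟨-, hlt, hT⟩ := mem_filter.1 (mem_coe.1 hij)
    refine mem_coe.2 (mem_backPairs.2 ⟨?_, ?_, hlt, (natExtension_val T j i).2 hT⟩) <;>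
      simp only [block, mem_Ico, zero_mul, zero_add, one_mul, Nat.zero_le, true_and] <;> omega
  · rintro ⟨i, j⟩ _ ⟨i', j'⟩ _ hij
    simpa [Fin.ext_iff] using hij

end

/-- **Theorem (Girão–Narayanan).** For each `t ≥ 3` there is `C = C(t) > 0` such that every
tournament on `n ≥ C` vertices that is `C·n^{-1/⌈t/2⌉}`-far from being transitive (every
ordering of its vertices has at least `C·n^{2 - 1/⌈t/2⌉}` backward edges) contains a copy
of the unavoidable `t`-tournament `𝒰_t`. -/
theorem statement1 :
    ∀ t : ℕ, 3 ≤ t →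
      ∃ C : ℝ, 0 < C ∧
        ∀ (n : ℕ) (T : Fin n → Fin n → Prop), IsTournament T →
          C ≤ (n : ℝ) →
          (∀ σ : Equiv.Perm (Fin n),
            C * (n : ℝ) ^ ((2 : ℝ) - 1 / (((t + 1) / 2 : ℕ) : ℝ)) ≤ (backCount T σ : ℝ)) →
          ContainsU T t := by
  intro t ht
  obtain ⟨K, hK, hbound⟩ := exists_card_backPairs_block_le ((t + 1) / 2) t (by omega) (by omega)
  set β : ℝ := (2 : ℝ) - 1 / (((t + 1) / 2 : ℕ) : ℝ) with hβ
  have hβ0 : 0 ≤ β := by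
    have : (1 : ℝ) / (((t + 1) / 2 : ℕ) : ℝ) ≤ 1 := by
      have h1 : (1 : ℝ) ≤ (((t + 1) / 2 : ℕ) : ℝ) := by
        exact_mod_cast (by omega : 1 ≤ (t + 1) / 2)
      exact div_le_one_of_le₀ h1 (by positivity)
    linarith
  refine ⟨K * 144 ^ β + 1, by positivity, fun n T hT hn hfar => ?_⟩
  have hn0 : (0 : ℝ) < n := lt_of_lt_of_le (by positivity) hn
  by_contra hU
  obtain ⟨σ, hσ⟩ := Finite.exists_min fun σ : Equiv.Perm (Fin n) => backCount T σ
  have hT₁ : IsTournament fun i j => T (σ i) (σ j) :=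
    ⟨fun x => hT.1 _, fun x y hxy => hT.2 _ _ (σ.injective.ne hxy)⟩
  have hO := isLocallyOptimal_natExtension (T := fun i j => T (σ i) (σ j))
    fun τ => hσ (τ.trans σ)
  have hU₁ : ¬ ContainsU (natExtension fun i j => T (σ i) (σ j)) t := fun h =>
    hU (h.of_natExtension.of_equiv σ)
  have h1 := hbound _ hT₁.natExtension hO hU₁ (Nat.log 144 n + 1) 0 0
  have h2 : backCount T σ ≤ _ := backCount_refl_le (fun i j => T (σ i) (σ j))
    (Nat.lt_pow_succ_log_self (by norm_num : 1 < 144) n).le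
  have h3 : (((144 ^ (Nat.log 144 n + 1) : ℕ) : ℝ)) ≤ 144 * n := by
    have : 144 ^ (Nat.log 144 n + 1) ≤ 144 * n := by
      rw [pow_succ']
      exact Nat.mul_le_mul_left _ (Nat.pow_log_le_self _ (by exact_mod_cast hn0.ne'))
    exact_mod_cast this
  have h4 : (((144 ^ (Nat.log 144 n + 1) : ℕ) : ℝ)) ^ β ≤ 144 ^ β * (n : ℝ) ^ β := by
    rw [← Real.mul_rpow (by norm_num) hn0.le]
    exact Real.rpow_le_rpow (by positivity) h3 hβ0
  have h5 : (backCount T σ : ℝ) ≤ K * (144 ^ β * (n : ℝ) ^ β) :=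
    (Nat.cast_le.2 h2).trans (h1.trans (mul_le_mul_of_nonneg_left h4 hK.le))
  have h6 := hfar σ
  have h7 : (0 : ℝ) < (n : ℝ) ^ β := by positivity
  linarith
end

section
/- For each integer t ≥ 3 and all sufficiently large n, there exists a tournament on n vertices that does not contain a copy of the unavoidable t-tournament 𝒰_t and that is δ_t-far from being transitive, where δ_t(n) = 10^{-6}·ex(n, K_{⌈t/2⌉, t})/n²; that is, every linear ordering of its vertex set has at least 10^{-6}·ex(n, K_{⌈t/2⌉, t}) backward edges. -/
/-- `G` contains a copy of `H` (as a not necessarily induced subgraph). -/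
def ContainsCopy {V W : Type*} (G : SimpleGraph V) (H : SimpleGraph W) : Prop :=
  ∃ f : W → V, Function.Injective f ∧ ∀ a b, H.Adj a b → G.Adj (f a) (f b)

/-- The Turán number `ex(n, H)`: the maximum number of edges of an `H`-free
graph on `n` vertices. -/
noncomputable def turanNumber (n : ℕ) {W : Type*} (H : SimpleGraph W) : ℕ :=
  sSup {m | ∃ G : SimpleGraph (Fin n), ¬ ContainsCopy G H ∧ G.edgeSet.ncard = m}

/-- A permutation whose pull-back of `G` has on `P` at least the average density of `G`. -/
theorem exists_perm_card_mul_le {V : Type*} [Fintype V] (G : SimpleGraph V)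
    (P : Finset (V × V)) (hP : ∀ p ∈ P, p.1 ≠ p.2) :
    ∃ σ : Equiv.Perm V,
      P.card * {p : V × V | G.Adj p.1 p.2}.ncard ≤
        Fintype.card V ^ 2 * {p : V × V | p ∈ P ∧ G.Adj (σ p.1) (σ p.2)}.ncard := by
  classical
  set D := {p : V × V | G.Adj p.1 p.2}.ncard
  let c : V × V → ℕ := fun p =>
    (Finset.univ.filter fun σ : Equiv.Perm V => G.Adj (σ p.1) (σ p.2)).card
  have hc : ∀ p q : V × V, q.1 ≠ q.2 → c p ≤ c q := by
    rintro ⟨i, j⟩ ⟨i', j'⟩ hq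
    by_cases hp : i = j
    · simp [c, hp]
    obtain ⟨τ, h₁, h₂⟩ : ∃ τ : Equiv.Perm V, τ i' = i ∧ τ j' = j := by
      refine ⟨Equiv.swap (Equiv.swap i' i j') j * Equiv.swap i' i, ?_, ?_⟩
      · simp only [Equiv.Perm.mul_apply, Equiv.swap_apply_left]
        apply Equiv.swap_apply_of_ne_of_ne _ hp
        intro h
        apply hq
        apply (Equiv.swap i' i).injective
        simpa using h
      · simp
    refine Finset.card_le_card_of_injOn (fun σ => σ * τ) ?_ ?_
    · intro σ hσ
      simpa [h₁, h₂] using hσ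
    · intro σ _ ρ _ h
      exact mul_right_cancel h
  have hcount : ∀ Q : Finset (V × V), ∑ σ : Equiv.Perm V,
      {p : V × V | p ∈ Q ∧ G.Adj (σ p.1) (σ p.2)}.ncard = ∑ p ∈ Q, c p := by
    intro Q
    simp only [c, Finset.card_filter]
    rw [Finset.sum_comm]
    refine Finset.sum_congr rfl fun σ _ => ?_
    rw [← Finset.card_filter, ← Set.ncard_coe_finset]
    congr 1
    ext p
    simp
  have hinv : ∀ σ : Equiv.Perm V,
      {p : V × V | p ∈ Finset.univ ∧ G.Adj (σ p.1) (σ p.2)}.ncard = D := by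
    intro σ
    refine Set.ncard_congr (fun p _ => (σ p.1, σ p.2)) ?_ ?_ ?_
    · intro p hp
      exact hp.2
    · rintro ⟨a, b⟩ ⟨a', b'⟩ _ _ h
      simpa using h
    · rintro ⟨a, b⟩ h
      exact ⟨(σ.symm a, σ.symm b), by simpa using h, by simp⟩
  have htotal : Fintype.card (Equiv.Perm V) * D = ∑ p : V × V, c p := by
    rw [← hcount]
    simp only [hinv]
    simp
  have hsum : Fintype.card (Equiv.Perm V) * (P.card * D) ≤
      Fintype.card V ^ 2 * ∑ p ∈ P, c p := by
    calc _ = ∑ q ∈ P, ∑ p : V × V, c p := by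
            rw [Finset.sum_const, ← htotal, smul_eq_mul]; ring
      _ ≤ ∑ q ∈ P, ∑ _p : V × V, c q :=
            Finset.sum_le_sum fun q hq => Finset.sum_le_sum fun p _ => hc p q (hP q hq)
      _ = _ := by
            simp [Finset.mul_sum, sq]
  by_contra! hlt
  have := Finset.sum_lt_sum_of_nonempty (s := (Finset.univ : Finset (Equiv.Perm V)))
    Finset.univ_nonempty fun σ _ => hlt σ
  rw [← Finset.mul_sum, hcount, Finset.sum_const, smul_eq_mul, Finset.card_univ] at this
  omega

theorem exists_ncard_edgeSet_eq_turanNumber (n : ℕ) {W : Type*} (H : SimpleGraph W)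
    (hH : ∃ a b, H.Adj a b) :
    ∃ G : SimpleGraph (Fin n), ¬ ContainsCopy G H ∧ G.edgeSet.ncard = turanNumber n H := by
  refine Nat.sSup_mem (s := {m | ∃ G : SimpleGraph (Fin n),
    ¬ ContainsCopy G H ∧ G.edgeSet.ncard = m}) ?_ ?_
  · obtain ⟨a, b, hab⟩ := hH
    exact ⟨_, ⊥, fun ⟨f, _, hf⟩ => hf a b hab, rfl⟩
  · refine ⟨Nat.card (Sym2 (Fin n)), ?_⟩
    rintro _ ⟨G, _, rfl⟩
    exact Set.ncard_le_card _

theorem ncard_edgeSet_le_ncard_adj {V : Type*} [Finite V] (G : SimpleGraph V) :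
    G.edgeSet.ncard ≤ {p : V × V | G.Adj p.1 p.2}.ncard := by
  have h : G.edgeSet ⊆ (fun p : V × V => s(p.1, p.2)) '' {p : V × V | G.Adj p.1 p.2} := by
    intro e he
    induction e with
    | h a b => exact ⟨(a, b), he, rfl⟩
  exact (Set.ncard_le_ncard h).trans (Set.ncard_image_le (Set.toFinite _))

theorem containsCopy_completeBipartiteGraph {V α β : Type*} {G : SimpleGraph V}
    (f : α → V) (g : β → V) (hf : f.Injective) (hg : g.Injective)
    (h : ∀ a b, G.Adj (f a) (g b)) : ContainsCopy G (completeBipartiteGraph α β) := by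
  refine ⟨Sum.elim f g, hf.sumElim hg fun a b => (h a b).ne, ?_⟩
  rintro (a | a) (b | b) hab <;> simp at hab ⊢
  · exact h a b
  · exact (h b a).symm

theorem ContainsCopy.of_comap {V V' W : Type*} {G : SimpleGraph V} {H : SimpleGraph W}
    (σ : V' ≃ V) (h : ContainsCopy (G.comap σ) H) : ContainsCopy G H := by
  obtain ⟨f, hf, hadj⟩ := h
  exact ⟨σ ∘ f, σ.injective.comp hf, hadj⟩

/-- The natural order with the edges of `R` (pairs `x < y`) reversed. -/
def reverseAlong {n : ℕ} (R : Fin n → Fin n → Prop) (x y : Fin n) : Prop :=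
  (x < y ∧ ¬ R x y) ∨ (y < x ∧ R y x)

theorem isTournament_reverseAlong {n : ℕ} (R : Fin n → Fin n → Prop) :
    IsTournament (reverseAlong R) := by
  refine ⟨fun x h => ?_, fun x y hxy => ?_⟩
  · rcases h with h | h <;> exact lt_irrefl _ h.1
  · unfold reverseAlong
    rcases lt_or_gt_of_ne hxy with h | h
    · simp [h, h.not_gt]
    · simp [h, h.not_gt]

/-- Reversing, across a cut `{x < k}`, a `K_{⌈t/2⌉,t}`-free graph creates no copy of `𝒰_t`. -/
theorem not_containsU_reverseAlong {n t : ℕ} (ht : 1 ≤ t) (k : ℕ) (G : SimpleGraph (Fin n))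
    (hG : ¬ ContainsCopy G (completeBipartiteGraph (Fin ((t + 1) / 2)) (Fin t)))
    (R : Fin n → Fin n → Prop) (hRG : ∀ x y, R x y → G.Adj x y)
    (hR : ∀ x y, R x y → x.val < k ∧ k ≤ y.val) :
    ¬ ContainsU (reverseAlong R) t := by
  classical
  rintro ⟨f, hf, hT⟩
  have hcyc : ∀ i : Fin 3, ∀ a b, reverseAlong R (f (i, a)) (f (i + 1, b)) :=
    fun i a b => hT _ _ (Or.inr rfl)
  have hlow : ∀ x y, reverseAlong R x y → x.val < k → y.val < k → x < y := by
    rintro x y (h | h) hx hy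
    · exact h.1
    · have := hR _ _ h.2; omega
  have hhigh : ∀ x y, reverseAlong R x y → k ≤ x.val → k ≤ y.val → x < y := by
    rintro x y (h | h) hx hy
    · exact h.1
    · have := hR _ _ h.2; omega
  have hback : ∀ x y, reverseAlong R x y → k ≤ x.val → y.val < k → G.Adj x y := by
    rintro x y (h | h) hx hy
    · have := h.1; omega
    · exact (hRG _ _ h.2).symm
  have hinj : ∀ i, Function.Injective fun a => f (i, a) := fun i a b h => by
    simpa using hf h
  have hhalf : (t + 1) / 2 ≤ t := by omega
  obtain ⟨i, hi⟩ : ∃ i, ∀ a, k ≤ (f (i, a)).val := by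
    by_contra! h
    choose a ha using h
    have h₀ := hlow _ _ (hcyc 0 (a 0) (a 1)) (ha 0) (ha 1)
    have h₁ := hlow _ _ (hcyc 1 (a 1) (a 2)) (ha 1) (ha 2)
    have h₂ := hlow _ _ (hcyc 2 (a 2) (a 0)) (ha 2) (ha 0)
    exact lt_irrefl _ (h₀.trans (h₁.trans h₂))
  obtain ⟨j, hj⟩ : ∃ j, ∀ a, (f (j, a)).val < k := by
    by_contra! h
    choose a ha using h
    have h₀ := hhigh _ _ (hcyc 0 (a 0) (a 1)) (ha 0) (ha 1)
    have h₁ := hhigh _ _ (hcyc 1 (a 1) (a 2)) (ha 1) (ha 2)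
    have h₂ := hhigh _ _ (hcyc 2 (a 2) (a 0)) (ha 2) (ha 0)
    exact lt_irrefl _ (h₀.trans (h₁.trans h₂))
  have hij : i ≠ j := by
    rintro rfl
    have h₀ := hi ⟨0, ht⟩
    have h₁ := hj ⟨0, ht⟩
    omega
  have hcases : j = i + 1 ∨ j = i + 1 + 1 := by
    clear hi hj; revert i j; decide
  rcases hcases with rfl | rfl
  · refine hG (containsCopy_completeBipartiteGraph (fun a => f (i, Fin.castLE hhalf a))
      (fun b => f (i + 1, b)) ((hinj i).comp (Fin.castLE_injective hhalf)) (hinj _) fun a b => ?_)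
    exact hback _ _ (hcyc _ _ _) (hi _) (hj _)
  · let S : Finset (Fin t) := Finset.univ.filter fun a => (f (i + 1, a)).val < k
    have hS : S.card + Sᶜ.card = t := by simp
    by_cases hs : (t + 1) / 2 ≤ S.card
    · let e := S.orderEmbOfCardLe hs
      refine hG (containsCopy_completeBipartiteGraph (fun a => f (i + 1, e a))
        (fun b => f (i, b)) ((hinj _).comp e.injective) (hinj _) fun a b => ?_)
      have he : e a ∈ S := S.orderEmbOfCardLe_mem hs a
      exact (hback _ _ (hcyc _ _ _) (hi _) (by simpa [S] using he)).symm
    · have hs' : (t + 1) / 2 ≤ Sᶜ.card := by omega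
      let e := Sᶜ.orderEmbOfCardLe hs'
      refine hG (containsCopy_completeBipartiteGraph (fun a => f (i + 1, e a))
        (fun b => f (i + 1 + 1, b)) ((hinj _).comp e.injective) (hinj _) fun a b => ?_)
      have he : e a ∈ Sᶜ := Sᶜ.orderEmbOfCardLe_mem hs' a
      exact hback _ _ (hcyc _ _ _) (by simpa [S] using he) (hj _)

/-- The cyclic triangles `x → z → y → x` with `z ∈ [m, 2m)`, `z ≡ x + y (mod m)`, are
edge-disjoint, so every ordering has a backward edge for each reversed pair. -/
theorem ncard_le_backCount_reverseAlong {n m : ℕ} (hm : 3 * m ≤ n) (R : Fin n → Fin n → Prop)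
    (hR : ∀ x y, R x y → x.val < m ∧ 2 * m ≤ y.val ∧ y.val < 3 * m) (σ : Equiv.Perm (Fin n)) :
    {p : Fin n × Fin n | R p.1 p.2}.ncard ≤ backCount (reverseAlong R) σ := by
  classical
  let third : Fin n × Fin n → Fin n := fun p =>
    if h : p.1.val < m ∧ 2 * m ≤ p.2.val ∧ p.2.val < 3 * m then
      if p.1.val + p.2.val < 3 * m then ⟨p.1.val + p.2.val - m, by omega⟩
      else ⟨p.1.val + p.2.val - 2 * m, by omega⟩
    else p.1
  have hthird : ∀ p : Fin n × Fin n, R p.1 p.2 →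
      m ≤ (third p).val ∧ (third p).val < 2 * m ∧
      ((third p).val + m = p.1.val + p.2.val ∨ (third p).val + 2 * m = p.1.val + p.2.val) := by
    intro p hp
    have h := hR _ _ hp
    simp only [third, dif_pos h]
    split_ifs <;> simp only <;> omega
  let ρ := σ.symm
  let g : Fin n × Fin n → Fin n × Fin n := fun p =>
    if ρ (third p) < ρ p.1 then (third p, p.1)
    else if ρ p.2 < ρ (third p) then (p.2, third p)
    else (p.1, p.2)
  refine Set.ncard_le_ncard_of_injOn (fun p => (ρ (g p).1, ρ (g p).2)) ?_ ?_ (Set.toFinite _)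
  · intro p hp
    have h := hR _ _ hp
    have h₃ := hthird p hp
    have hxz : p.1 < third p := by rw [Fin.lt_def]; omega
    have hzy : third p < p.2 := by rw [Fin.lt_def]; omega
    have hR₁ : ¬ R p.1 (third p) := fun h' => by have := hR _ _ h'; omega
    have hR₂ : ¬ R (third p) p.2 := fun h' => by have := hR _ _ h'; omega
    by_cases h₁ : ρ (third p) < ρ p.1
    · exact ⟨by simp [g, h₁], by simpa [g, h₁, ρ, reverseAlong] using Or.inl ⟨hxz, hR₁⟩⟩
    by_cases h₂ : ρ p.2 < ρ (third p)
    · exact ⟨by simp [g, h₁, h₂],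
        by simpa [g, h₁, h₂, ρ, reverseAlong] using Or.inl ⟨hzy, hR₂⟩⟩
    have hne₁ : ρ (third p) ≠ ρ p.1 := fun h' => hxz.ne' (ρ.injective h')
    have hlt : ρ p.1 < ρ p.2 := by
      have := lt_of_le_of_ne (not_lt.mp h₁) hne₁.symm
      exact this.trans_le (not_lt.mp h₂)
    exact ⟨by simpa only [g, h₁, h₂, if_false] using hlt,
      by simpa [g, h₁, h₂, ρ, reverseAlong] using Or.inr ⟨hxz.trans hzy, hp⟩⟩
  · rintro p hp q hq hpq
    have hg : g p = g q := by
      simpa [Prod.ext_iff] using hpq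
    have hp₁ := hR _ _ hp
    have hq₁ := hR _ _ hq
    have hp₂ := hthird p hp
    have hq₂ := hthird q hq
    rw [Prod.ext_iff, Fin.ext_iff, Fin.ext_iff] at hg ⊢
    simp only [g] at hg
    split_ifs at hg <;> simp only at hg <;> omega

/-- **Proposition (extremal construction for tournaments).** For each `t ≥ 3` and all large
enough `n`, there is a tournament on `n` vertices with no copy of `𝒰_t` in which every
ordering of the vertex set has at least `ex(n, K_{⌈t/2⌉,t}) / 10^6` backward edges. -/
theorem statement3 :
    ∀ t : ℕ, 3 ≤ t →
      ∃ N : ℕ, ∀ n : ℕ, N ≤ n →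
        ∃ T : Fin n → Fin n → Prop, IsTournament T ∧ ¬ ContainsU T t ∧
          ∀ σ : Equiv.Perm (Fin n),
            (turanNumber n (completeBipartiteGraph (Fin ((t + 1) / 2)) (Fin t)) : ℝ) / 10 ^ 6 ≤
              (backCount T σ : ℝ) := by
  intro t ht
  refine ⟨3, fun n hn => ?_⟩
  obtain ⟨G, hG, hcard⟩ := exists_ncard_edgeSet_eq_turanNumber n
    (completeBipartiteGraph (Fin ((t + 1) / 2)) (Fin t))
    ⟨Sum.inl ⟨0, by omega⟩, Sum.inr ⟨0, by omega⟩, by simp⟩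
  rw [← hcard]
  set m := n / 3 with hm
  have h3m : 3 * m ≤ n := by omega
  let emb : Fin m × Fin m → Fin n × Fin n := fun p =>
    (⟨p.1, by omega⟩, ⟨2 * m + p.2, by omega⟩)
  have hemb : Function.Injective emb := by
    rintro ⟨a, b⟩ ⟨a', b'⟩ h
    simp only [emb, Prod.mk.injEq, Fin.mk.injEq] at h
    simp only [Prod.mk.injEq, Fin.ext_iff]
    omega
  obtain ⟨τ, hτ⟩ := exists_perm_card_mul_le G (Finset.univ.image emb) (by
    simp only [Finset.mem_image, Finset.mem_univ, true_and, forall_exists_index]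
    rintro _ p rfl
    simp only [emb, ne_eq, Fin.mk.injEq]
    omega)
  rw [Finset.card_image_of_injective _ hemb, Finset.card_univ, Fintype.card_prod,
    Fintype.card_fin, Fintype.card_fin] at hτ
  let R : Fin n → Fin n → Prop := fun x y =>
    (x, y) ∈ Finset.univ.image emb ∧ G.Adj (τ x) (τ y)
  have hR : ∀ x y, R x y → x.val < m ∧ 2 * m ≤ y.val ∧ y.val < 3 * m := by
    rintro x y ⟨h, _⟩
    obtain ⟨p, _, hp⟩ := Finset.mem_image.mp h
    simp only [emb, Prod.mk.injEq, Fin.ext_iff] at hp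
    omega
  refine ⟨reverseAlong R, isTournament_reverseAlong R, ?_, fun σ => ?_⟩
  · refine not_containsU_reverseAlong (by omega) (2 * m) (G.comap τ)
      (fun h => hG (h.of_comap τ)) R (fun x y h => h.2) fun x y h => ?_
    have := hR x y h
    omega
  · have hback := ncard_le_backCount_reverseAlong h3m R hR σ
    have hedge := ncard_edgeSet_le_ncard_adj G
    have hn5 : n ≤ 5 * m := by omega
    have hm0 : 0 < m * m := by
      have : 0 < m := by omega
      positivity
    have hmain : G.edgeSet.ncard ≤ 25 * backCount (reverseAlong R) σ := by
      refine Nat.le_of_mul_le_mul_left ?_ hm0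
      calc m * m * G.edgeSet.ncard ≤ _ := Nat.mul_le_mul_left _ hedge
        _ ≤ _ := hτ
        _ ≤ (5 * m) ^ 2 * backCount (reverseAlong R) σ :=
          Nat.mul_le_mul (Nat.pow_le_pow_left hn5 2) hback
        _ = _ := by ring
    have hreal : (G.edgeSet.ncard : ℝ) ≤ 25 * backCount (reverseAlong R) σ := by
      exact_mod_cast hmain
    have : (0 : ℝ) ≤ backCount (reverseAlong R) σ := Nat.cast_nonneg _
    linarith
end

section
/- Let t ≥ 3 be an integer and set r = ⌈t/2⌉. For all sufficiently large n the following holds. Let H be a bipartite graph on n vertices with vertex classes A and B that contains no copy of K_{r,t} and has at least (ex(n, K_{r,t}) − 1)/2 edges, and let T be the tournament on A ∪ B in which T[A] and T[B] are transitive (following fixed linear orders on A and on B), each edge ab of H with a ∈ A, b ∈ B is directed from b to a in T, and every other edge between A and B is directed from A to B. Then every linear ordering of the vertex set of T has at least e(H)/10⁵ backward edges. -/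
/-- The tournament on `A ∪ B` built from a bipartite graph `H` between `A = Fin a` and
`B = Fin b`: within `A` and within `B` edges follow the linear orders (so both classes are
transitive); an edge of `H` between `x ∈ A` and `y ∈ B` is directed from `y` to `x`, and
every other edge between the classes is directed from `A` to `B`. -/
def bipTournament (a b : ℕ) (H : Fin a → Fin b → Prop) (x y : Fin a ⊕ Fin b) : Prop :=
  match x, y with
  | Sum.inl u, Sum.inl v => u < v
  | Sum.inr u, Sum.inr v => u < v
  | Sum.inl u, Sum.inr v => ¬ H u v
  | Sum.inr v, Sum.inl u => H u v

/-- The bipartite graph `H` between `Fin a` and `Fin b` contains no copy of `K_{r,t}`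
(in either orientation). -/
def NoKrt {a b : ℕ} (H : Fin a → Fin b → Prop) (r t : ℕ) : Prop :=
  (¬ ∃ (A : Finset (Fin a)) (B : Finset (Fin b)),
      A.card = r ∧ B.card = t ∧ ∀ x ∈ A, ∀ y ∈ B, H x y) ∧
  (¬ ∃ (A : Finset (Fin a)) (B : Finset (Fin b)),
      A.card = t ∧ B.card = r ∧ ∀ x ∈ A, ∀ y ∈ B, H x y)

/-- Split `{0, …, s - 1}` into blocks of length `2 * t`. Up to one incomplete block and the blocks in
which `P` holds more than `t` times, `P` holds at most as often as it fails. -/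
lemma count_le_count_not_add (P : ℕ → Prop) [DecidablePred P] {t : ℕ} (ht : 0 < t) (s : ℕ) :
    Nat.count P s ≤ Nat.count (fun i => ¬ P i) s + 2 * t + 2 * t *
      ((Finset.range (s / (2 * t))).filter
        fun q => t < Nat.count (fun k => P (2 * t * q + k)) (2 * t)).card := by
  have compl : ∀ (Q : ℕ → Prop) [DecidablePred Q] (m : ℕ),
      Nat.count Q m + Nat.count (fun i => ¬ Q i) m = m := by
    intro Q _ m
    induction m with
    | zero => simp
    | succ m ih =>
      rw [Nat.count_succ, Nat.count_succ]
      by_cases h : Q m <;> simp [h] <;> omega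
  have blocks : ∀ k : ℕ, Nat.count P (2 * t * k) ≤ Nat.count (fun i => ¬ P i) (2 * t * k) +
      2 * t * ((Finset.range k).filter
        fun q => t < Nat.count (fun k => P (2 * t * q + k)) (2 * t)).card := by
    intro k
    induction k with
    | zero => simp
    | succ k ih =>
      rw [Nat.mul_succ, Nat.count_add, Nat.count_add, Finset.range_add_one, Finset.filter_insert]
      have h := compl (fun j => P (2 * t * k + j)) (2 * t)
      split_ifs with hbad
      · rw [Finset.card_insert_of_notMem (by simp), Nat.mul_succ]
        omega
      · omega
  have hs : s = 2 * t * (s / (2 * t)) + s % (2 * t) := (Nat.div_add_mod s (2 * t)).symm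
  have hr : s % (2 * t) < 2 * t := Nat.mod_lt _ (by omega)
  have h := blocks (s / (2 * t))
  have h1 := Nat.count_add P (2 * t * (s / (2 * t))) (s % (2 * t))
  have h2 := Nat.count_add (fun i => ¬ P i) (2 * t * (s / (2 * t))) (s % (2 * t))
  have h3 := compl (fun j => P (2 * t * (s / (2 * t)) + j)) (s % (2 * t))
  rw [← hs] at h1 h2
  omega

open Classical in
/-- In a relation without `K_{t,t}`, few elements of `β` are related to more than `t` elements of a
fixed block of `w` consecutive numbers. -/
lemma card_filter_lt_count_le {β : Type*} [Fintype β] (R : ℕ → β → Prop) (t w m : ℕ)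
    (hR : ¬ ∃ (S : Finset ℕ) (B : Finset β), S.card = t ∧ B.card = t ∧ ∀ x ∈ S, ∀ y ∈ B, R x y) :
    (Finset.univ.filter fun y : β => t < Nat.count (fun k => R (m + k) y) w).card ≤
      t * 2 ^ w := by
  set bad := Finset.univ.filter fun y : β => t < Nat.count (fun k => R (m + k) y) w
  let row : β → Finset ℕ := fun y => (Finset.range w).filter fun k => R (m + k) y
  have hrow : ∀ y ∈ bad, row y ∈ (Finset.range w).powerset := fun y _ =>
    Finset.mem_powerset.2 (Finset.filter_subset _ _)
  have key : bad.card ≤ t * ((Finset.range w).powerset).card := by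
    refine Finset.card_le_mul_card_image_of_maps_to hrow t fun S _ => ?_
    by_contra! hlt
    obtain ⟨B, hB, hBt⟩ := Finset.exists_subset_card_eq hlt.le
    obtain ⟨y, hy⟩ := Finset.card_pos.1 (Nat.zero_lt_of_lt hlt)
    have hy' := Finset.mem_filter.1 hy
    have hSt : t ≤ S.card := by
      rw [← hy'.2]
      have := (Finset.mem_filter.1 hy'.1).2
      rw [Nat.count_eq_card_filter_range] at this
      exact this.le
    obtain ⟨S', hS', hS't⟩ := Finset.exists_subset_card_eq hSt
    refine hR ⟨S'.map (addLeftEmbedding m), B, by simpa using hS't, hBt, ?_⟩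
    intro x hx z hz
    obtain ⟨k, hk, rfl⟩ := Finset.mem_map.1 hx
    have hkz : k ∈ row z := by
      rw [(Finset.mem_filter.1 (hB hz)).2]
      exact hS' hk
    exact (Finset.mem_filter.1 hkz).2
  simpa using key

open Classical in
/-- A relation without `K_{t,t}` fills at most about half of any staircase shape. -/
lemma sum_count_le_sum_count_not_add {β : Type*} [Fintype β] (R : ℕ → β → Prop) {t : ℕ}
    (ht : 0 < t) (a : ℕ)
    (hR : ¬ ∃ (S : Finset ℕ) (B : Finset β), S.card = t ∧ B.card = t ∧ ∀ x ∈ S, ∀ y ∈ B, R x y)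
    (s : β → ℕ) (hs : ∀ y, s y ≤ a) :
    ∑ y, Nat.count (fun i => R i y) (s y) ≤ ∑ y, Nat.count (fun i => ¬ R i y) (s y) +
      2 * t * (1 + t * 2 ^ (2 * t)) * (a + Fintype.card β) := by
  let bad : ℕ → β → Prop := fun q y => t < Nat.count (fun k => R (2 * t * q + k) y) (2 * t)
  have h1 : ∀ y, Nat.count (fun i => R i y) (s y) ≤ Nat.count (fun i => ¬ R i y) (s y) + 2 * t +
      2 * t * ((Finset.range a).filter fun q => bad q y).card := by
    intro y
    refine (count_le_count_not_add (fun i => R i y) ht (s y)).trans ?_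
    gcongr
    exact (Nat.div_le_self _ _).trans (hs y)
  have h2 : ∑ y, ((Finset.range a).filter fun q => bad q y).card ≤ a * (t * 2 ^ (2 * t)) := by
    have hswap := Finset.sum_card_bipartiteAbove_eq_sum_card_bipartiteBelow
      (s := Finset.range a) (t := (Finset.univ : Finset β)) bad
    simp only [Finset.bipartiteAbove, Finset.bipartiteBelow] at hswap
    rw [← hswap]
    refine (Finset.sum_le_card_nsmul _ _ (t * 2 ^ (2 * t)) fun q _ => ?_).trans (by simp)
    exact card_filter_lt_count_le R t (2 * t) (2 * t * q) hR
  calc ∑ y, Nat.count (fun i => R i y) (s y)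
      ≤ ∑ y, (Nat.count (fun i => ¬ R i y) (s y) + 2 * t +
          2 * t * ((Finset.range a).filter fun q => bad q y).card) :=
        Finset.sum_le_sum fun y _ => h1 y
    _ = ∑ y, Nat.count (fun i => ¬ R i y) (s y) + 2 * t * Fintype.card β +
          2 * t * ∑ y, ((Finset.range a).filter fun q => bad q y).card := by
        rw [Finset.sum_add_distrib, Finset.sum_add_distrib, Finset.mul_sum, Finset.sum_const,
          Finset.card_univ, smul_eq_mul, mul_comm (Fintype.card β) (2 * t)]
    _ ≤ ∑ y, Nat.count (fun i => ¬ R i y) (s y) + 2 * t * Fintype.card β +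
          2 * t * (a * (t * 2 ^ (2 * t))) := by gcongr
    _ ≤ _ := by
        have : 2 * t * (1 + t * 2 ^ (2 * t)) * (a + Fintype.card β) =
          2 * t * Fintype.card β + 2 * t * (a * (t * 2 ^ (2 * t))) +
            (2 * t * a + 2 * t * (t * 2 ^ (2 * t)) * Fintype.card β) := by ring
        omega

lemma exists_iff_lt_of_antitone {p : ℕ → Prop} (hp : ∀ i j, i ≤ j → p j → p i) {a : ℕ}
    (ha : ¬ p a) : ∃ s ≤ a, ∀ i, p i ↔ i < s := by
  classical
  have hex : ∃ i, ¬ p i := ⟨a, ha⟩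
  refine ⟨Nat.find hex, Nat.find_min' hex ha, fun i => ⟨fun hi => ?_, fun hi => ?_⟩⟩
  · by_contra! h
    exact Nat.find_spec hex (hp _ _ h hi)
  · simpa using Nat.find_min hex hi

open Classical in
/-- If `H` has no `K_{t,t}`, then for any position functions on the two classes, the pairs
`(u, v)` with `v` placed before `u` contain at most about as many edges as non-edges of `H`. -/
lemma card_edges_le_card_nonedges_add {a b n : ℕ} (H : Fin a → Fin b → Prop) {t : ℕ} (ht : 0 < t)
    (hH : ¬ ∃ (A : Finset (Fin a)) (B : Finset (Fin b)),
      A.card = t ∧ B.card = t ∧ ∀ x ∈ A, ∀ y ∈ B, H x y)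
    (f : Fin a → Fin n) (g : Fin b → Fin n) :
    (Finset.univ.filter fun p : Fin a × Fin b => H p.1 p.2 ∧ g p.2 < f p.1).card ≤
      (Finset.univ.filter fun p : Fin a × Fin b => ¬ H p.1 p.2 ∧ g p.2 < f p.1).card +
        2 * t * (1 + t * 2 ^ (2 * t)) * (a + b) := by
  let e : Equiv.Perm (Fin a) := Tuple.sort fun u => (f u).rev
  have he : ∀ i j, i ≤ j → f (e j) ≤ f (e i) := fun i j hij =>
    Fin.rev_le_rev.1 (Tuple.monotone_sort (fun u => (f u).rev) hij)
  let R : ℕ → Fin b → Prop := fun i v => ∃ h : i < a, H (e ⟨i, h⟩) v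
  have hR : ¬ ∃ (S : Finset ℕ) (B : Finset (Fin b)),
      S.card = t ∧ B.card = t ∧ ∀ x ∈ S, ∀ y ∈ B, R x y := by
    rintro ⟨S, B, hS, hB, h⟩
    obtain ⟨y, hy⟩ := Finset.card_pos.1 (hB ▸ ht)
    have hlt : ∀ x ∈ S, x < a := fun x hx => (h x hx y hy).1
    refine hH ⟨(S.attachFin hlt).map e.toEmbedding, B, by simpa using hS, hB, ?_⟩
    intro x hx z hz
    obtain ⟨i, hi, rfl⟩ := Finset.mem_map.1 hx
    exact (h i (Finset.mem_attachFin hlt |>.1 hi) z hz).2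
  have hshape : ∀ v, ∃ s ≤ a, ∀ i, (∃ h : i < a, g v < f (e ⟨i, h⟩)) ↔ i < s := fun v =>
    exists_iff_lt_of_antitone
      (fun i j hij ⟨hj, h⟩ => ⟨hij.trans_lt hj, h.trans_le (he _ _ hij)⟩) (by simp)
  choose s hsa hs using hshape
  have count_eq : ∀ (Q : Fin a → Fin b → Prop) (Q' : ℕ → Fin b → Prop),
      (∀ (i : Fin a) v, Q' i v ↔ Q (e i) v) →
      (Finset.univ.filter fun p : Fin a × Fin b => Q p.1 p.2 ∧ g p.2 < f p.1).card =
        ∑ v, Nat.count (fun i => Q' i v) (s v) := by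
    intro Q Q' hQ
    rw [Finset.card_filter, Fintype.sum_prod_type_right]
    refine Finset.sum_congr rfl fun v _ => ?_
    rw [← Finset.card_filter, Nat.count_eq_card_filter_range]
    symm
    refine Finset.card_bij (fun i hi => e ⟨i, ?_⟩) ?_ ?_ ?_
    · exact (Finset.mem_range.1 (Finset.mem_filter.1 hi).1).trans_le (hsa v)
    · intro i hi
      have hi' := Finset.mem_filter.1 hi
      obtain ⟨h, hg⟩ := (hs v i).2 (Finset.mem_range.1 hi'.1)
      exact Finset.mem_filter.2 ⟨Finset.mem_univ _, (hQ ⟨i, h⟩ v).1 hi'.2, hg⟩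
    · intro i _ j _ hij
      simpa using hij
    · intro u hu
      have hu' := (Finset.mem_filter.1 hu).2
      refine ⟨(e.symm u : ℕ), Finset.mem_filter.2 ⟨Finset.mem_range.2 ?_, ?_⟩, by simp⟩
      · exact (hs v _).1 ⟨(e.symm u).2, by simpa using hu'.2⟩
      · exact (hQ _ v).2 (by simpa using hu'.1)
  have hpos := count_eq H R fun i v => by simp [R]
  have hneg := count_eq (fun u v => ¬ H u v) (fun i v => ¬ R i v) fun i v => by simp [R]
  have hsum := sum_count_le_sum_count_not_add R ht a hR s hsa
  rw [Fintype.card_fin] at hsum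
  rw [hpos]
  convert hsum using 2
  convert hneg

open Classical in
/-- Edges of `H` running against the ordering, and non-edges running along it, give backward
edges. -/
lemma card_add_card_le_backCount {a b : ℕ} (H : Fin a → Fin b → Prop)
    (σ : Fin (a + b) ≃ (Fin a ⊕ Fin b)) :
    (Finset.univ.filter fun p : Fin a × Fin b =>
        H p.1 p.2 ∧ ¬ σ.symm (.inr p.2) < σ.symm (.inl p.1)).card +
      (Finset.univ.filter fun p : Fin a × Fin b =>
        ¬ H p.1 p.2 ∧ σ.symm (.inr p.2) < σ.symm (.inl p.1)).card ≤
      backCount (bipTournament a b H) σ := by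
  rw [← Finset.card_union_of_disjoint
    (Finset.disjoint_left.2 fun p h1 h2 => (Finset.mem_filter.1 h2).2.1 (Finset.mem_filter.1 h1).2.1),
    backCount, ← Set.ncard_coe_finset]
  refine Set.ncard_le_ncard_of_injOn
    (fun p => if H p.1 p.2 then (σ.symm (.inl p.1), σ.symm (.inr p.2))
      else (σ.symm (.inr p.2), σ.symm (.inl p.1))) ?_ ?_ (Set.toFinite _)
  · rintro ⟨u, v⟩ hp
    have hne : σ.symm (.inl u) ≠ σ.symm (.inr v) := by simp
    by_cases h : H u v
    · have : σ.symm (.inl u) ≤ σ.symm (.inr v) := by simpa [h] using hp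
      simpa [h, bipTournament] using lt_of_le_of_ne this hne
    · simpa [h, bipTournament] using hp
  · rintro ⟨u, v⟩ - ⟨u', v'⟩ - h
    by_cases h1 : H u v <;> by_cases h2 : H u' v' <;> simp_all

lemma le_turanNumber {n : ℕ} {W : Type*} {H : SimpleGraph W} (G : SimpleGraph (Fin n))
    (hG : ¬ ContainsCopy G H) : G.edgeSet.ncard ≤ turanNumber n H := by
  refine le_csSup ⟨(Set.univ : Set (Sym2 (Fin n))).ncard, ?_⟩ ⟨G, hG, rfl⟩
  rintro m ⟨G', -, rfl⟩
  exact Set.ncard_le_ncard (Set.subset_univ _) (Set.toFinite _)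

/-- The point-line incidence graph of the affine plane over `ZMod p` (without the vertical lines)
contains no four-cycle and has `p ^ 3` edges. -/
lemma cube_le_turanNumber {p n r t : ℕ} (hp : p.Prime) (hn : 2 * p ^ 2 ≤ n) (hr : 2 ≤ r)
    (ht : 2 ≤ t) : p ^ 3 ≤ turanNumber n (completeBipartiteGraph (Fin r) (Fin t)) := by
  have := Fact.mk hp
  obtain ⟨g⟩ : Nonempty ((ZMod p × ZMod p) ⊕ (ZMod p × ZMod p) ↪ Fin n) := by
    rw [Function.Embedding.nonempty_iff_card_le]
    simp only [Fintype.card_sum, Fintype.card_prod, ZMod.card, Fintype.card_fin]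
    nlinarith
  let inc : Fin n → Fin n → Prop := fun u v => ∃ x m c : ZMod p,
    u = g (.inl (x, m * x + c)) ∧ v = g (.inr (m, c))
  let G : SimpleGraph (Fin n) :=
    { Adj := fun u v => inc u v ∨ inc v u
      symm := ⟨fun u v h => h.symm⟩
      loopless := ⟨by
        rintro u (⟨x, m, c, h, h'⟩ | ⟨x, m, c, h, h'⟩) <;> simp [h] at h'⟩ }
  have inc_unique : ∀ u u' v v', inc u v → inc u v' → inc u' v → inc u' v' → u = u' ∨ v = v' := by
    rintro _ _ _ _ ⟨x, m, c, rfl, rfl⟩ ⟨x₁, m', c', h₁, rfl⟩ ⟨x', m₂, c₂, rfl, h₂⟩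
      ⟨x₃, m₃, c₃, h₃, h₃'⟩
    simp only [EmbeddingLike.apply_eq_iff_eq, Sum.inl.injEq, Sum.inr.injEq, Prod.mk.injEq]
      at h₁ h₂ h₃ h₃' ⊢
    obtain ⟨rfl, h₁⟩ := h₁
    obtain ⟨rfl, rfl⟩ := h₂
    obtain ⟨rfl, h₃⟩ := h₃
    obtain ⟨rfl, rfl⟩ := h₃'
    have : (m - m') * (x - x') = 0 := by linear_combination h₁ - h₃
    rcases mul_eq_zero.1 this with h | h
    · right
      obtain rfl := sub_eq_zero.1 h
      exact ⟨rfl, by linear_combination h₁⟩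
    · left
      obtain rfl := sub_eq_zero.1 h
      exact ⟨rfl, rfl⟩
  have inc_asymm : ∀ u v w, inc u v → ¬ inc w u := by
    rintro _ _ _ ⟨x, m, c, rfl, rfl⟩ ⟨x', m', c', rfl, h⟩
    simp at h
  have hG : ¬ ContainsCopy G (completeBipartiteGraph (Fin r) (Fin t)) := by
    rintro ⟨f, hf, hadj⟩
    have adj : ∀ i j, inc (f (.inl i)) (f (.inr j)) ∨ inc (f (.inr j)) (f (.inl i)) :=
      fun i j => hadj _ _ (by simp)
    let i₀ : Fin r := ⟨0, by omega⟩
    let i₁ : Fin r := ⟨1, by omega⟩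
    let j₀ : Fin t := ⟨0, by omega⟩
    let j₁ : Fin t := ⟨1, by omega⟩
    have hi : f (.inl i₀) ≠ f (.inl i₁) := fun h => by simpa [i₀, i₁] using hf h
    have hj : f (.inr j₀) ≠ f (.inr j₁) := fun h => by simpa [j₀, j₁] using hf h
    rcases adj i₀ j₀ with h₀₀ | h₀₀
    · have h₀₁ := (adj i₀ j₁).resolve_right (inc_asymm _ _ _ h₀₀)
      have h₁₀ := (adj i₁ j₀).resolve_right fun k => inc_asymm _ _ _ k h₀₀
      have h₁₁ := (adj i₁ j₁).resolve_right (inc_asymm _ _ _ h₁₀)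
      exact (inc_unique _ _ _ _ h₀₀ h₀₁ h₁₀ h₁₁).elim hi hj
    · have h₀₁ := (adj i₀ j₁).resolve_left fun k => inc_asymm _ _ _ k h₀₀
      have h₁₀ := (adj i₁ j₀).resolve_left (inc_asymm _ _ _ h₀₀)
      have h₁₁ := (adj i₁ j₁).resolve_left fun k => inc_asymm _ _ _ k h₁₀
      exact (inc_unique _ _ _ _ h₀₀ h₁₀ h₀₁ h₁₁).elim hj hi
  refine le_trans ?_ (le_turanNumber G hG)
  let edge : ZMod p × ZMod p × ZMod p → Sym2 (Fin n) := fun q =>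
    s(g (.inl (q.1, q.2.1 * q.1 + q.2.2)), g (.inr (q.2.1, q.2.2)))
  have hedge : Function.Injective edge := by
    rintro ⟨x, m, c⟩ ⟨x', m', c'⟩ h
    simp only [edge, Sym2.eq_iff, EmbeddingLike.apply_eq_iff_eq, Sum.inl.injEq, Sum.inr.injEq,
      Prod.mk.injEq, reduceCtorEq, and_self, or_false] at h
    obtain ⟨⟨rfl, -⟩, rfl, rfl⟩ := h
    rfl
  have hcard : (Set.range edge).ncard = p ^ 3 := by
    rw [Set.ncard_range_of_injective hedge]
    simp [Nat.card_eq_fintype_card, ZMod.card]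
    ring
  rw [← hcard]
  refine Set.ncard_le_ncard ?_ (Set.toFinite _)
  rintro _ ⟨⟨x, m, c⟩, rfl⟩
  exact Or.inl ⟨x, m, c, rfl, rfl⟩

lemma mul_le_turanNumber {D n r t : ℕ} (hD : 0 < D) (hn : 8 * D ^ 2 ≤ n) (hr : 2 ≤ r)
    (ht : 2 ≤ t) :
    D * n ≤ 8 * turanNumber n (completeBipartiteGraph (Fin r) (Fin t)) := by
  have hk : D ≤ Nat.sqrt (n / 8) := Nat.le_sqrt'.2 (by omega)
  obtain ⟨p, hp, hkp, hpk⟩ := Nat.exists_prime_lt_and_le_two_mul (Nat.sqrt (n / 8)) (by omega)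
  have h1 : Nat.sqrt (n / 8) ^ 2 ≤ n / 8 := Nat.sqrt_le' _
  have h2 : n / 8 < (Nat.sqrt (n / 8) + 1) ^ 2 := Nat.lt_succ_sqrt' _
  have h3 : p ^ 2 ≤ (2 * Nat.sqrt (n / 8)) ^ 2 := Nat.pow_le_pow_left hpk 2
  have h4 : (Nat.sqrt (n / 8) + 1) ^ 2 ≤ p ^ 2 := Nat.pow_le_pow_left hkp 2
  have h5 : n ≤ 8 * p ^ 2 := by omega
  have h6 := cube_le_turanNumber (n := n) hp (by rw [mul_pow] at h3; omega) hr ht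
  calc D * n ≤ p * (8 * p ^ 2) := Nat.mul_le_mul (by omega) h5
    _ = 8 * p ^ 3 := by ring
    _ ≤ _ := by omega

/-- **Claim.** For `t ≥ 3`, `r = ⌈t/2⌉` and all sufficiently large `n = a + b`: if the
bipartite graph `H` between classes of sizes `a` and `b` has no copy of `K_{r,t}` and at
least `(ex(n, K_{r,t}) - 1)/2` edges, then every ordering of the vertex set of the
associated tournament has at least `e(H)/10^5` backward edges. -/
theorem statement11 (t : ℕ) (ht : 3 ≤ t) :
    ∃ N : ℕ, ∀ (a b : ℕ) (H : Fin a → Fin b → Prop), N ≤ a + b →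
      NoKrt H ((t + 1) / 2) t →
      ((turanNumber (a + b) (completeBipartiteGraph (Fin ((t + 1) / 2)) (Fin t)) : ℝ) - 1) / 2 ≤
        (({p : Fin a × Fin b | H p.1 p.2}).ncard : ℝ) →
      ∀ σ : Fin (a + b) ≃ (Fin a ⊕ Fin b),
        (({p : Fin a × Fin b | H p.1 p.2}).ncard : ℝ) / 10 ^ 5 ≤
          (backCount (bipTournament a b H) σ : ℝ) := by
  classical
  set C := 2 * t * (1 + t * 2 ^ (2 * t)) with hC
  refine ⟨8 * (8 * (4 * C + 1)) ^ 2, fun a b H hn hH hedges σ => ?_⟩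
  have hturan := mul_le_turanNumber (r := (t + 1) / 2) (t := t) (by omega) hn (by omega) (by omega)
  set τ := turanNumber (a + b) (completeBipartiteGraph (Fin ((t + 1) / 2)) (Fin t))
  have hKtt : ¬ ∃ (A : Finset (Fin a)) (B : Finset (Fin b)),
      A.card = t ∧ B.card = t ∧ ∀ x ∈ A, ∀ y ∈ B, H x y := by
    rintro ⟨A, B, hA, hB, h⟩
    obtain ⟨A', hA', hcard⟩ := Finset.exists_subset_card_eq (s := A) (n := (t + 1) / 2) (by omega)
    exact hH.1 ⟨A', B, hcard, hB, fun x hx => h x (hA' hx)⟩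
  have hhalf := card_edges_le_card_nonedges_add H (by omega) hKtt
    (fun u => σ.symm (.inl u)) (fun v => σ.symm (.inr v))
  rw [← hC] at hhalf
  have hback := card_add_card_le_backCount H σ
  have hsplit : {p : Fin a × Fin b | H p.1 p.2}.ncard =
      (Finset.univ.filter fun p : Fin a × Fin b =>
        H p.1 p.2 ∧ σ.symm (.inr p.2) < σ.symm (.inl p.1)).card +
      (Finset.univ.filter fun p : Fin a × Fin b =>
        H p.1 p.2 ∧ ¬ σ.symm (.inr p.2) < σ.symm (.inl p.1)).card := by
    rw [← Finset.filter_filter, ← Finset.filter_filter,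
      Finset.card_filter_add_card_filter_not, ← Set.ncard_coe_finset]
    simp
  have hmain : {p : Fin a × Fin b | H p.1 p.2}.ncard ≤
      backCount (bipTournament a b H) σ + C * (a + b) := by
    omega
  have hlarge : 4 * (C * (a + b)) + 1 ≤ τ := by
    have : 1 ≤ a + b := le_trans (Nat.one_le_iff_ne_zero.2 (by positivity)) hn
    nlinarith
  have hmain' : ({p : Fin a × Fin b | H p.1 p.2}.ncard : ℝ) ≤
      backCount (bipTournament a b H) σ + ((C * (a + b) : ℕ) : ℝ) := by exact_mod_cast hmain
  have hlarge' : 4 * ((C * (a + b) : ℕ) : ℝ) + 1 ≤ (τ : ℝ) := by exact_mod_cast hlarge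
  have hnonneg : (0 : ℝ) ≤ {p : Fin a × Fin b | H p.1 p.2}.ncard := by positivity
  linarith
end
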